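/- arXiv:1308.6817 — 2 statements merged into one kernel-verified Lean document; each statement's English description precedes it below -/
import Mathlib

section
/- Fix n > m ≥ 1. Let 𝒩_{m,n} = {Y ∈ Mₙ(ℂ) : Y_{ij} = 0 for all 1 ≤ j < i ≤ m} (a complex linear subspace of complex dimension n² − m(m−1)/2, carrying Lebesgue measure) and let 𝒱_{m,n} = 𝒩_{m,n} ∩ U(n), a compact smooth submanifold of real dimension n² − m(m−1), carrying the normalized (n² − m(m−1))-dimensional Hausdorff (volume) probability measure H_𝒱. Then for every continuous function f : Mₙ(ℂ) → ℂ, ∫_{𝒱_{m,n}} f(V) dH_𝒱(V) = lim_{ε→0⁺} ( ∫_{{X ∈ 𝒩_{m,n} : ‖X*X − I‖ < ε}} f(X) dX ) / ( ∫_{{X ∈ 𝒩_{m,n} : ‖X*X − I‖ < ε}} dX ), where ‖·‖ is the Frobenius norm and dX denotes Lebesgue measure on 𝒩_{m,n}. -/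
/-!
`𝒱_{m,n}` is the zero set of `F Y = Y* Y - 1`, as a map from `𝒩_{m,n}` to the Hermitian matrices,
so the claim compares the tubes `{‖F‖ < ε}` around a regular zero set with its Hausdorff measure.
Near a zero `p`, a chart straightens `F` to its derivative `L` at `p` and distorts distances by a
factor at most `K`; the tube of a linear map is explicit, and letting `K` tend to `1` shows that the
rescaled tube measures converge to the Hausdorff measure with density a constant multiple of
`det (L L*) ^ (-1/2)`.

The averages therefore converge as soon as this normal Jacobian is constant on the zero set. At
`V`, `L` is twice the compression of the isometry `X ↦ V* X` to `𝒩_{m,n}` and the Hermitian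
matrices, and Sylvester's determinant identity rewrites `det (L L*)` as a determinant on the
orthogonal complement of `𝒩_{m,n}`. Because `V B* V ∈ 𝒩_{m,n}` for every `B` in that complement, the
operator there is a scalar that does not depend on `V`.
-/

open MeasureTheory Filter Matrix

noncomputable section

noncomputable instance (ι : Type*) [Fintype ι] : MeasurableSpace (EuclideanSpace ℂ ι) :=
  borel _

instance (ι : Type*) [Fintype ι] : BorelSpace (EuclideanSpace ℂ ι) := ⟨rfl⟩

/-- The Frobenius norm `‖M‖ = √(tr (M* M))` of an `n × n` complex matrix. -/
def frobNorm (n : ℕ) (M : Matrix (Fin n) (Fin n) ℂ) : ℝ :=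
  Real.sqrt (Matrix.trace (Mᴴ * M)).re

/-- Indices of the entries of a matrix in `𝒩_{m,n}` that are not constrained to vanish:
the constraint is `Y i j = 0` for `j < i < m` (`0`-indexed). -/
abbrev FreeIdx (n m : ℕ) := {p : Fin n × Fin n // ¬((p.2 : ℕ) < (p.1 : ℕ) ∧ (p.1 : ℕ) < m)}

/-- The isometric embedding of coordinates on the free entries into matrix space
(Euclidean, i.e. Frobenius, geometry), filling the constrained entries with `0`. -/
def embed (n m : ℕ) (x : FreeIdx n m → ℂ) : Fin n × Fin n → ℂ := fun p =>
  if h : ¬((p.2 : ℕ) < (p.1 : ℕ) ∧ (p.1 : ℕ) < m) then x ⟨p, h⟩ else 0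

/-- `𝒱_{m,n} = 𝒩_{m,n} ∩ U(n)` inside matrix space with the Frobenius (Euclidean) metric. -/
def VSet (n m : ℕ) : Set (EuclideanSpace ℂ (Fin n × Fin n)) :=
  {X | (Matrix.of fun i j : Fin n => X (i, j)) ∈ Matrix.unitaryGroup (Fin n) ℂ ∧
    ∀ i j : Fin n, (j : ℕ) < (i : ℕ) → (i : ℕ) < m → X (i, j) = 0}

open Module Topology

open scoped ENNReal NNReal

section LinearTubes

theorem finrank_ker_of_surjective {𝕜 V W : Type*} [DivisionRing 𝕜] [AddCommGroup V] [Module 𝕜 V]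
    [FiniteDimensional 𝕜 V] [AddCommGroup W] [Module 𝕜 W] {L : V →ₗ[𝕜] W}
    (hL : Function.Surjective L) :
    finrank 𝕜 (LinearMap.ker L) = finrank 𝕜 V - finrank 𝕜 W := by
  have rank_nullity := L.finrank_range_add_finrank_ker
  rw [LinearMap.range_eq_top.2 hL, finrank_top] at rank_nullity
  omega

variable {E : Type*} [NormedAddCommGroup E] [InnerProductSpace ℝ E] [FiniteDimensional ℝ E]

section Fibres

variable [MeasurableSpace E] [BorelSpace E]

theorem lintegral_eq_lintegral_orthogonal (K : Submodule ℝ E) {f : E → ℝ≥0∞}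
    (hf : Measurable f) : ∫⁻ x, f x = ∫⁻ w : Kᗮ, ∫⁻ k : K, f (k + w) := by
  have hsplit := (K.measurePreserving_measurableEquivProd (0 : E)).symm
  rw [← InnerProductSpace.euclideanHausdorffMeasure_eq_volume, ← hsplit.lintegral_comp hf,
    Measure.volume_eq_prod]
  refine (lintegral_prod_symm' _
    (hf.comp (K.measurableEquivProd (0 : E)).symm.measurable)).trans ?_
  simp only [Function.comp_apply, Submodule.measurableEquivProd_symm_apply, vadd_eq_add, add_zero]

theorem lintegral_ker_eq_lintegral_preimage_zero {H : Type*} [AddCommGroup H] [Module ℝ H]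
    {L : E →ₗ[ℝ] H} (hL : Function.Surjective L)
    {f : E → ℝ≥0∞} (hf : Measurable f) :
    ∫⁻ k : LinearMap.ker L, f k =
      ∫⁻ x in L ⁻¹' {0}, f x ∂μHE[finrank ℝ E - finrank ℝ H] := by
  have hmap := (isometry_subtype_coe (s := (LinearMap.ker L : Set E))).map_euclideanHausdorffMeasure
    (d := finrank ℝ (LinearMap.ker L))
  rw [Subtype.range_coe, finrank_ker_of_surjective hL] at hmap
  rw [show L ⁻¹' {0} = (LinearMap.ker L : Set E) from rfl, ← hmap,
    lintegral_map hf measurable_subtype_coe, ← finrank_ker_of_surjective hL]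
  exact congrArg (fun μ : Measure (LinearMap.ker L) => ∫⁻ k, f k ∂μ)
    InnerProductSpace.euclideanHausdorffMeasure_eq_volume.symm

end Fibres

variable {H : Type*} [NormedAddCommGroup H] [InnerProductSpace ℝ H] [FiniteDimensional ℝ H]

theorem adjoint_injective_of_surjective {L : E →ₗ[ℝ] H} (hL : Function.Surjective L) :
    Function.Injective L.adjoint := by
  rw [← LinearMap.ker_eq_bot, ← L.orthogonal_range, LinearMap.range_eq_top.2 hL,
    Submodule.top_orthogonal_eq_bot]

theorem normDet_adjoint_pos {L : E →ₗ[ℝ] H} (hL : Function.Surjective L) :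
    0 < L.adjoint.normDet :=
  L.adjoint.normDet_nonneg.lt_of_ne' fun h =>
    LinearMap.normDet_eq_zero_iff_ker_ne_bot.1 h
      (LinearMap.ker_eq_bot.2 (adjoint_injective_of_surjective hL))

theorem normDet_adjoint_sq (L : E →ₗ[ℝ] H) :
    L.adjoint.normDet ^ 2 = LinearMap.det (L ∘ₗ L.adjoint) := by
  simpa using L.adjoint.normDet_sq

theorem norm_ker_le_norm_add_adjoint {L : E →ₗ[ℝ] H} (k : LinearMap.ker L) (h : H) :
    ‖(k : E)‖ ≤ ‖(k : E) + L.adjoint h‖ := by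
  have hk : L k = 0 := k.2
  have orthogonal : inner ℝ (k : E) (L.adjoint h) = 0 := by
    rw [L.adjoint_inner_right, hk, inner_zero_left]
  nlinarith [norm_add_sq_eq_norm_sq_add_norm_sq_real orthogonal, norm_nonneg (k + L.adjoint h),
    mul_self_nonneg ‖L.adjoint h‖]

theorem exists_le_indicator_closedBall (L : E →ₗ[ℝ] H) {φ : E → ℝ≥0} (hφ : Continuous φ)
    (hφc : HasCompactSupport φ) :
    ∃ (C : ℝ≥0) (R : ℝ), ∀ (k : LinearMap.ker L) (h : H), (φ (k + L.adjoint h) : ℝ≥0∞) ≤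
      (Metric.closedBall (0 : LinearMap.ker L) R).indicator (fun _ => (C : ℝ≥0∞)) k := by
  obtain ⟨R, hR⟩ := hφc.isCompact.isBounded.subset_closedBall 0
  obtain ⟨C, hC⟩ := hφ.bddAbove_range_of_hasCompactSupport hφc
  refine ⟨C, R, fun k h => ?_⟩
  by_cases hk : k ∈ Metric.closedBall (0 : LinearMap.ker L) R
  · rw [Set.indicator_of_mem hk]
    exact ENNReal.coe_le_coe.2 (hC ⟨_, rfl⟩)
  · have notMem : (k : E) + L.adjoint h ∉ tsupport φ := fun hmem =>
      hk (mem_closedBall_zero_iff.2 ((norm_ker_le_norm_add_adjoint k h).trans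
        (mem_closedBall_zero_iff.1 (hR hmem))))
    simp [image_eq_zero_of_notMem_tsupport notMem]

variable [MeasurableSpace H] [BorelSpace H]

/-- The density of the normalized tubes `{x | ‖L x‖ < ε}` of a linear surjection around its
kernel: the volume of the unit ball of `H` over the normal Jacobian `√det (L L*)`. -/
def tubeDensity (L : E →ₗ[ℝ] H) : ℝ≥0∞ :=
  volume (Metric.ball (0 : H) 1) / ENNReal.ofReal L.adjoint.normDet

theorem tubeDensity_ne_top {L : E →ₗ[ℝ] H} (hL : Function.Surjective L) : tubeDensity L ≠ ∞ :=
  ENNReal.div_ne_top measure_ball_lt_top.ne (ENNReal.ofReal_pos.2 (normDet_adjoint_pos hL)).ne'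

theorem tubeDensity_ne_zero (L : E →ₗ[ℝ] H) : tubeDensity L ≠ 0 :=
  ENNReal.div_ne_zero.2 ⟨(Metric.measure_ball_pos _ _ one_pos).ne', ENNReal.ofReal_ne_top⟩

theorem volume_preimage_unitBall {L : E →ₗ[ℝ] H} (hL : Function.Surjective L) :
    volume ((L ∘ₗ L.adjoint) ⁻¹' Metric.ball (0 : H) 1) =
      (ENNReal.ofReal L.adjoint.normDet)⁻¹ * tubeDensity L := by
  have normDet_pos := normDet_adjoint_pos hL
  rw [Measure.addHaar_preimage_linearMap _ (by rw [← normDet_adjoint_sq]; positivity),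
    ← normDet_adjoint_sq, abs_of_pos (by positivity), sq, mul_inv,
    ENNReal.ofReal_mul (by positivity), ENNReal.ofReal_inv_of_pos normDet_pos, mul_assoc,
    tubeDensity, ENNReal.div_eq_inv_mul]

variable [MeasurableSpace E] [BorelSpace E]

theorem volume_eq_ofReal_normDet_smul_map (A : E ≃ₗ[ℝ] H) :
    (volume : Measure H) = ENNReal.ofReal (A : E →ₗ[ℝ] H).normDet • volume.map A := by
  ext s hs
  have hA : Measurable A := A.toContinuousLinearEquiv.continuous.measurable
  have image : A '' (A ⁻¹' s) = s := Set.image_preimage_eq s A.surjective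
  have h := (A : E →ₗ[ℝ] H).euclideanHausdorffMeasure_image_eq_normDet_mul_volume (A ⁻¹' s)
  rw [LinearEquiv.coe_coe, image, A.finrank_eq,
    InnerProductSpace.euclideanHausdorffMeasure_eq_volume] at h
  rw [h, Measure.smul_apply, smul_eq_mul, Measure.map_apply hA hs]

theorem lintegral_eq_normDet_mul_lintegral {K : Submodule ℝ E} {J : H →ₗ[ℝ] E}
    (hJ : Function.Injective J) (hJK : LinearMap.range J = Kᗮ)
    {f : E → ℝ≥0∞} (hf : Measurable f) :
    ∫⁻ x, f x = ENNReal.ofReal J.normDet * ∫⁻ h, ∫⁻ k : K, f (k + J h) := by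
  let A : H ≃ₗ[ℝ] Kᗮ := (LinearEquiv.ofInjective J hJ).trans (LinearEquiv.ofEq _ _ hJK)
  have coe_A (h : H) : (A h : E) = J h := rfl
  have normDet_A : (A : H →ₗ[ℝ] Kᗮ).normDet = J.normDet :=
    LinearMap.normDet_codRestrict (f := J) fun h => (A h).2
  have measurableEmbedding_A : MeasurableEmbedding A :=
    A.toContinuousLinearEquiv.toHomeomorph.measurableEmbedding
  rw [lintegral_eq_lintegral_orthogonal K hf, volume_eq_ofReal_normDet_smul_map A,
    lintegral_smul_measure, measurableEmbedding_A.lintegral_map, normDet_A, smul_eq_mul]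
  simp only [coe_A]

/-- The integral of `f` over the tube `{x | ‖F x‖ < ε}`, normalized by the order of magnitude
`ε ^ dim H` of the volume of a tube around a submanifold of codimension `dim H`. -/
def tubeIntegral (F : E → H) (f : E → ℝ≥0∞) (ε : ℝ) : ℝ≥0∞ :=
  (ENNReal.ofReal ε ^ finrank ℝ H)⁻¹ * ∫⁻ x in F ⁻¹' Metric.ball 0 ε, f x

theorem tubeIntegral_linear {L : E →ₗ[ℝ] H} (hL : Function.Surjective L)
    {f : E → ℝ≥0∞} (hf : Measurable f) {ε : ℝ} (hε : 0 < ε) :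
    tubeIntegral L f ε =
      ENNReal.ofReal L.adjoint.normDet *
        ∫⁻ h in (L ∘ₗ L.adjoint) ⁻¹' Metric.ball 0 1, ∫⁻ k : LinearMap.ker L,
          f (k + ε • L.adjoint h) := by
  have measurableSet_tube : MeasurableSet (L ⁻¹' Metric.ball 0 ε) :=
    (Metric.isOpen_ball.preimage L.continuous_of_finiteDimensional).measurableSet
  have measurableSet_base : MeasurableSet ((L ∘ₗ L.adjoint) ⁻¹' Metric.ball 0 1) :=
    (Metric.isOpen_ball.preimage
      (L ∘ₗ L.adjoint).continuous_of_finiteDimensional).measurableSet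
  have mem_tube (h : H) (k : LinearMap.ker L) :
      (k : E) + ε • L.adjoint h ∈ L ⁻¹' Metric.ball 0 ε ↔
        h ∈ (L ∘ₗ L.adjoint) ⁻¹' Metric.ball 0 1 := by
    have hk : L k = 0 := k.2
    simp [hk, norm_smul, abs_of_pos hε, mul_lt_iff_lt_one_right hε]
  have injective : Function.Injective (ε • L.adjoint) := fun x y hxy =>
    adjoint_injective_of_surjective hL (smul_right_injective E hε.ne' hxy)
  have range : LinearMap.range (ε • L.adjoint) = (LinearMap.ker L)ᗮ := by
    rw [LinearMap.range_smul _ _ hε.ne', L.orthogonal_ker]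
  have scale_ne_zero : ENNReal.ofReal ε ^ finrank ℝ H ≠ 0 := by simp [hε]
  have scale_ne_top : ENNReal.ofReal ε ^ finrank ℝ H ≠ ∞ := by simp
  have fubini := lintegral_eq_normDet_mul_lintegral injective range
    (hf.indicator measurableSet_tube)
  rw [tubeIntegral, ← lintegral_indicator measurableSet_tube, fubini, LinearMap.normDet_smul,
    Real.norm_eq_abs, abs_of_pos hε,
    ENNReal.ofReal_mul (by positivity), ENNReal.ofReal_pow hε.le, mul_assoc,
    ENNReal.inv_mul_cancel_left (fun h => absurd h scale_ne_zero) fun h => absurd h scale_ne_top,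
    ← lintegral_indicator measurableSet_base]
  congr 2 with h
  by_cases hh : h ∈ (L ∘ₗ L.adjoint) ⁻¹' Metric.ball 0 1
  · rw [Set.indicator_of_mem hh]
    exact lintegral_congr fun k => Set.indicator_of_mem ((mem_tube h k).2 hh) f
  · rw [Set.indicator_of_notMem hh, ← lintegral_zero]
    exact lintegral_congr fun k => Set.indicator_of_notMem (mt (mem_tube h k).1 hh) f

theorem tendsto_lintegral_slices {L : E →ₗ[ℝ] H} {S : Set H} (hS : volume S ≠ ∞)
    {φ : E → ℝ≥0} (hφ : Continuous φ) (hφc : HasCompactSupport φ) :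
    Tendsto (fun ε : ℝ => ∫⁻ h in S, ∫⁻ k : LinearMap.ker L, φ (k + ε • L.adjoint h)) (𝓝 0)
      (𝓝 (volume S * ∫⁻ k : LinearMap.ker L, φ k)) := by
  obtain ⟨C, R, hCR⟩ := exists_le_indicator_closedBall L hφ hφc
  let μ : Measure (H × LinearMap.ker L) := (volume.restrict S).prod volume
  let slab : Set (H × LinearMap.ker L) := Prod.snd ⁻¹' Metric.closedBall 0 R
  have measurableSet_slab : MeasurableSet slab := measurable_snd measurableSet_closedBall
  have le_bound (ε : ℝ) (z : H × LinearMap.ker L) :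
      (φ (z.2 + ε • L.adjoint z.1) : ℝ≥0∞) ≤ slab.indicator (fun _ => (C : ℝ≥0∞)) z := by
    rw [← map_smul]
    exact (hCR z.2 (ε • z.1)).trans_eq (Set.indicator_comp_right Prod.snd).symm
  have measurable_integrand (ε : ℝ) :
      Measurable fun z : H × LinearMap.ker L => (φ (z.2 + ε • L.adjoint z.1) : ℝ≥0∞) := by
    have := L.adjoint.continuous_of_finiteDimensional
    fun_prop
  have bound_ne_top : ∫⁻ z, slab.indicator (fun _ => (C : ℝ≥0∞)) z ∂μ ≠ ∞ := by
    rw [lintegral_indicator_const measurableSet_slab,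
      show slab = Set.univ ×ˢ Metric.closedBall 0 R from Set.univ_prod.symm, Measure.prod_prod,
      Measure.restrict_apply_univ]
    exact ENNReal.mul_ne_top ENNReal.coe_ne_top
      (ENNReal.mul_ne_top hS measure_closedBall_lt_top.ne)
  have pointwise (z : H × LinearMap.ker L) :
      Tendsto (fun ε : ℝ => (φ (z.2 + ε • L.adjoint z.1) : ℝ≥0∞)) (𝓝 0) (𝓝 (φ z.2)) := by
    have hcont : Continuous fun ε : ℝ => (φ (z.2 + ε • L.adjoint z.1) : ℝ≥0∞) := by fun_prop
    simpa only [zero_smul, add_zero] using hcont.tendsto 0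
  have dominated := tendsto_lintegral_filter_of_dominated_convergence (μ := μ) _
    (.of_forall measurable_integrand) (.of_forall fun ε => .of_forall (le_bound ε)) bound_ne_top
    (.of_forall pointwise)
  have limit_eq : ∫⁻ z, φ z.2 ∂μ = volume S * ∫⁻ k : LinearMap.ker L, φ k := by
    rw [lintegral_prod _ (by fun_prop)]
    simp only [lintegral_const, Measure.restrict_apply_univ, mul_comm]
  rw [limit_eq] at dominated
  exact dominated.congr fun ε => lintegral_prod _ (measurable_integrand ε).aemeasurable

theorem tendsto_tubeIntegral_linear {L : E →ₗ[ℝ] H} (hL : Function.Surjective L)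
    {φ : E → ℝ≥0} (hφ : Continuous φ) (hφc : HasCompactSupport φ) :
    Tendsto (tubeIntegral L fun x => φ x) (𝓝[>] 0)
      (𝓝 (tubeDensity L * ∫⁻ x in L ⁻¹' {0}, φ x ∂μHE[finrank ℝ E - finrank ℝ H])) := by
  have normDet_ne_zero := (ENNReal.ofReal_pos.2 (normDet_adjoint_pos hL)).ne'
  have base_ne_top : volume ((L ∘ₗ L.adjoint) ⁻¹' Metric.ball (0 : H) 1) ≠ ∞ := by
    rw [volume_preimage_unitBall hL]
    exact ENNReal.mul_ne_top (ENNReal.inv_ne_top.2 normDet_ne_zero) (tubeDensity_ne_top hL)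
  have slices := (tendsto_lintegral_slices (L := L) base_ne_top hφ hφc).mono_left
    (nhdsWithin_le_nhds (s := Set.Ioi 0))
  have scaled := ENNReal.Tendsto.const_mul slices
    (.inr (ENNReal.ofReal_ne_top (r := L.adjoint.normDet)))
  rw [volume_preimage_unitBall hL, ← mul_assoc, ← mul_assoc,
    ENNReal.mul_inv_cancel normDet_ne_zero ENNReal.ofReal_ne_top, one_mul,
    lintegral_ker_eq_lintegral_preimage_zero hL (f := fun x => φ x) (by fun_prop)] at scaled
  refine scaled.congr' ?_
  filter_upwards [self_mem_nhdsWithin] with ε hε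
  exact (tubeIntegral_linear hL (f := fun x => φ x) (by fun_prop) hε).symm

end LinearTubes

section Charts

theorem exists_chart_of_hasStrictFDerivAt_id {E : Type*} [NormedAddCommGroup E] [NormedSpace ℝ E]
    [CompleteSpace E] {G : E → E} {p : E} (hG : HasStrictFDerivAt G (ContinuousLinearMap.id ℝ E) p)
    {K : ℝ≥0} (hK : 1 < K) :
    ∃ e : OpenPartialHomeomorph E E, (e : E → E) = G ∧ p ∈ e.source ∧
      LipschitzOnWith K e e.source ∧ LipschitzOnWith K e.symm e.target := by
  rcases subsingleton_or_nontrivial E with trivial_space | nontrivial_space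
  · exact ⟨OpenPartialHomeomorph.refl E, Subsingleton.elim _ _, Set.mem_univ p,
      LipschitzOnWith.of_dist_le_mul fun x _ y _ => by simp [Subsingleton.elim x y],
      LipschitzOnWith.of_dist_le_mul fun x _ y _ => by simp [Subsingleton.elim x y]⟩
  have inv_lt_one : K⁻¹ < 1 := inv_lt_one_of_one_lt₀ hK
  have norm_symm : ‖((ContinuousLinearEquiv.refl ℝ E).symm : E →L[ℝ] E)‖₊ = 1 :=
    ContinuousLinearMap.nnnorm_id
  obtain ⟨U, hU, hpU, approximates⟩ : ∃ U, IsOpen U ∧ p ∈ U ∧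
      ApproximatesLinearOn G (ContinuousLinearEquiv.refl ℝ E : E →L[ℝ] E) U (1 - K⁻¹) := by
    obtain ⟨s, hs, hGs⟩ := hG.approximates_deriv_on_nhds (.inr (tsub_pos_of_lt inv_lt_one))
    obtain ⟨U, hUs, hU, hpU⟩ := mem_nhds_iff.1 hs
    exact ⟨U, hU, hpU, hGs.mono_set hUs⟩
  have small : Subsingleton E ∨
      1 - K⁻¹ < ‖((ContinuousLinearEquiv.refl ℝ E).symm : E →L[ℝ] E)‖₊⁻¹ := by
    rw [norm_symm, inv_one]
    exact .inr (tsub_lt_self one_pos (inv_pos.2 (one_pos.trans hK)))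
  have antilipschitz : AntilipschitzWith K (U.domRestrict G) := by
    have h := approximates.antilipschitz small
    rwa [norm_symm, inv_one, tsub_tsub_cancel_of_le inv_lt_one.le, inv_inv] at h
  let e := approximates.toOpenPartialHomeomorph G U small hU
  refine ⟨e, rfl, hpU, ?_, ?_⟩
  · refine (lipschitzOnWith_iff_restrict.2 approximates.lipschitz).weaken ?_
    have two_le : 2 ≤ (K : ℝ) + (K : ℝ)⁻¹ := by
      have : (K : ℝ) ≠ 0 := by positivity
      field_simp
      nlinarith [sq_nonneg ((K : ℝ) - 1)]
    rw [← NNReal.coe_le_coe, NNReal.coe_add, NNReal.coe_sub inv_lt_one.le, coe_nnnorm]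
    have norm_id : ‖((ContinuousLinearEquiv.refl ℝ E) : E →L[ℝ] E)‖ = 1 :=
      ContinuousLinearMap.norm_id
    rw [norm_id, NNReal.coe_one, NNReal.coe_inv]
    linarith
  · exact lipschitzOnWith_iff_restrict.2 (antilipschitz.to_rightInvOn' e.mapsTo_symm e.rightInvOn)

/-- The chart is `x ↦ x - p + R (F x - L (x - p))`, which has derivative `id` at `p`. -/
theorem exists_linearizing_chart {E H : Type*} [NormedAddCommGroup E] [NormedSpace ℝ E]
    [CompleteSpace E] [NormedAddCommGroup H] [NormedSpace ℝ H] {F : E → H} {L : E →L[ℝ] H} {p : E}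
    (hF : HasStrictFDerivAt F L p) {R : H →L[ℝ] E} (hR : Function.RightInverse R L)
    {K : ℝ≥0} (hK : 1 < K) :
    ∃ e : OpenPartialHomeomorph E E, p ∈ e.source ∧ (∀ x, L (e x) = F x) ∧
      LipschitzOnWith K e e.source ∧ LipschitzOnWith K e.symm e.target := by
  let G : E → E := fun x => x - p + R (F x - L (x - p))
  have hL_G (x : E) : L (G x) = F x := by simp only [G, map_add, hR _, add_sub_cancel]
  have hG : HasStrictFDerivAt G (ContinuousLinearMap.id ℝ E) p := by
    have sub : HasStrictFDerivAt (fun x => x - p) (ContinuousLinearMap.id ℝ E) p :=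
      (hasStrictFDerivAt_id p).sub_const p
    have h := sub.add (R.hasStrictFDerivAt.comp p (hF.sub (L.hasStrictFDerivAt.comp p sub)))
    rwa [ContinuousLinearMap.comp_id, sub_self, ContinuousLinearMap.comp_zero, add_zero] at h
  obtain ⟨e, he, hp, lipschitz, lipschitz_symm⟩ := exists_chart_of_hasStrictFDerivAt_id hG hK
  exact ⟨e, hp, fun x => by rw [he, hL_G], lipschitz, lipschitz_symm⟩

theorem exists_compactly_supported_transport {X Y Z : Type*} [TopologicalSpace X]
    [TopologicalSpace Y] [T2Space Y] [TopologicalSpace Z] [Zero Z]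
    (e : OpenPartialHomeomorph X Y) {f : X → Z} (hf : Continuous f)
    (hfc : HasCompactSupport f) (hfe : tsupport f ⊆ e.source) :
    ∃ φ : Y → Z, Continuous φ ∧ HasCompactSupport φ ∧ (∀ x ∈ e.source, φ (e x) = f x) ∧
      Function.support φ ⊆ e.target := by
  classical
  let φ : Y → Z := e.target.piecewise (f ∘ e.symm) 0
  have isCompact_image : IsCompact (e '' tsupport f) :=
    hfc.isCompact.image_of_continuousOn (e.continuousOn.mono hfe)
  have φ_eq (y : Y) (hy : y ∈ e.target) : φ y = f (e.symm y) :=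
    Set.piecewise_eq_of_mem _ _ _ hy
  have φ_eq_zero : ∀ y ∉ e '' tsupport f, φ y = 0 := fun y hy => by
    by_cases hyt : y ∈ e.target
    · rw [φ_eq y hyt]
      exact image_eq_zero_of_notMem_tsupport fun h => hy ⟨e.symm y, h, e.right_inv hyt⟩
    · exact Set.piecewise_eq_of_notMem _ _ _ hyt
  refine ⟨φ, continuous_iff_continuousAt.2 fun y => ?_, HasCompactSupport.intro isCompact_image
    φ_eq_zero, fun x hx => ?_, fun y hy => ?_⟩
  · by_cases hy : y ∈ e.target
    · refine (hf.continuousAt.comp (e.continuousAt_symm hy)).congr ?_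
      filter_upwards [e.open_target.mem_nhds hy] with z hz
      exact (φ_eq z hz).symm
    · have hy' : y ∉ e '' tsupport f := by
        rintro ⟨x, hx, rfl⟩
        exact hy (e.map_source (hfe hx))
      refine continuousAt_const.congr (f := fun _ => 0) ?_
      filter_upwards [isCompact_image.isClosed.isOpen_compl.mem_nhds hy'] with z hz
      exact (φ_eq_zero z hz).symm
  · rw [φ_eq _ (e.map_source hx), e.left_inv hx]
  · by_contra hyt
    exact hy (Set.piecewise_eq_of_notMem _ _ _ hyt)

end Charts

section HausdorffComparison

section Metric

variable {X Y : Type*} [EMetricSpace X] [MeasurableSpace X] [BorelSpace X]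
  [EMetricSpace Y] [MeasurableSpace Y] [BorelSpace Y]

theorem euclideanHausdorffMeasure_image_le {f : X → Y} {s : Set X} {K : ℝ≥0}
    (hf : LipschitzOnWith K f s) (d : ℕ) : μHE[d] (f '' s) ≤ K ^ d * μHE[d] s := by
  have h := hf.hausdorffMeasure_image_le (Nat.cast_nonneg d)
  rw [ENNReal.rpow_natCast] at h
  simp only [Measure.euclideanHausdorffMeasure_def, Measure.smul_apply, ENNReal.smul_def,
    smul_eq_mul]
  rw [mul_left_comm]
  gcongr

theorem map_euclideanHausdorffMeasure_le (e : OpenPartialHomeomorph X Y) {K : ℝ≥0}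
    (he : LipschitzOnWith K e.symm e.target) (d : ℕ) :
    (μHE[d].restrict e.source).map e ≤ ((K : ℝ≥0∞) ^ d) • μHE[d].restrict e.target := by
  refine Measure.le_iff.2 fun B hB => ?_
  have measurable_e : AEMeasurable e (μHE[d].restrict e.source) :=
    e.continuousOn.aemeasurable e.open_source.measurableSet
  rw [Measure.map_apply_of_aemeasurable measurable_e hB,
    Measure.restrict_apply₀ (measurable_e.nullMeasurableSet_preimage hB), Measure.smul_apply,
    Measure.restrict_apply hB, Set.inter_comm (e ⁻¹' B), Set.inter_comm B]
  refine (congrArg μHE[d] (e.symm.image_source_inter_eq' B)).symm.trans_le ?_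
  exact euclideanHausdorffMeasure_image_le (he.mono Set.inter_subset_left) d

theorem setLIntegral_comp_le (e : OpenPartialHomeomorph X Y) {K : ℝ≥0}
    (he : LipschitzOnWith K e.symm e.target) (d : ℕ) {g : Y → ℝ≥0∞} (hg : Measurable g) :
    ∫⁻ x in e.source, g (e x) ∂μHE[d] ≤ K ^ d * ∫⁻ y in e.target, g y ∂μHE[d] := by
  rw [← lintegral_map' hg.aemeasurable (e.continuousOn.aemeasurable e.open_source.measurableSet),
    ← smul_eq_mul, ← lintegral_smul_measure]
  exact lintegral_mono' (map_euclideanHausdorffMeasure_le e he d) le_rfl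

theorem setLIntegral_preimage_le (e : OpenPartialHomeomorph X Y) {K : ℝ≥0}
    (he : LipschitzOnWith K e.symm e.target) (d : ℕ) {W : Type*} {F : X → W} {L : Y → W}
    (hL : ∀ x ∈ e.source, L (e x) = F x) {f : X → ℝ≥0∞} {φ : Y → ℝ≥0∞} (hφ : Measurable φ)
    (hφf : ∀ x ∈ e.source, φ (e x) = f x) (hf : Function.support f ⊆ e.source) {S : Set W}
    (hFS : MeasurableSet (F ⁻¹' S)) (hLS : MeasurableSet (L ⁻¹' S)) :
    ∫⁻ x in F ⁻¹' S, f x ∂μHE[d] ≤ K ^ d * ∫⁻ y in L ⁻¹' S, φ y ∂μHE[d] := by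
  have integrand_eq (x : X) (hx : x ∈ e.source) :
      (F ⁻¹' S).indicator f x = (L ⁻¹' S).indicator φ (e x) := by
    classical
    simp only [Set.indicator_apply, Set.mem_preimage, hL x hx, hφf x hx]
  calc ∫⁻ x in F ⁻¹' S, f x ∂μHE[d] = ∫⁻ x in e.source, (F ⁻¹' S).indicator f x ∂μHE[d] := by
        rw [← lintegral_indicator hFS, setLIntegral_eq_of_support_subset]
        exact Function.support_subset_iff'.2 fun x hx =>
          Set.indicator_apply_eq_zero.2 fun _ => Function.support_subset_iff'.1 hf x hx
    _ = ∫⁻ x in e.source, (L ⁻¹' S).indicator φ (e x) ∂μHE[d] :=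
        setLIntegral_congr_fun e.open_source.measurableSet integrand_eq
    _ ≤ K ^ d * ∫⁻ y in e.target, (L ⁻¹' S).indicator φ y ∂μHE[d] :=
        setLIntegral_comp_le e he d (hφ.indicator hLS)
    _ ≤ K ^ d * ∫⁻ y in L ⁻¹' S, φ y ∂μHE[d] := by
        rw [← lintegral_indicator hLS]
        exact mul_le_mul_right (setLIntegral_le_lintegral _ _) _

end Metric

end HausdorffComparison

section ApproximateLimits

variable {α : Type*} {l : Filter α}

/-- Up to the factor `C`, the function `T` is comparable near `l` to a function with a limit, and
this limit is comparable to `J`. Unlike convergence of `T` to `J`, this tolerates a fixed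
multiplicative distortion, and it is stable under finite sums. -/
def TendstoUpToFactor (C : ℝ≥0∞) (l : Filter α) (T : α → ℝ≥0∞) (J : ℝ≥0∞) : Prop :=
  ∃ (T₀ : α → ℝ≥0∞) (J₀ : ℝ≥0∞), Tendsto T₀ l (𝓝 J₀) ∧ (∀ᶠ x in l, T x ≤ C * T₀ x) ∧
    (∀ᶠ x in l, T₀ x ≤ C * T x) ∧ J ≤ C * J₀ ∧ J₀ ≤ C * J

namespace TendstoUpToFactor

theorem sum {ι : Type*} {s : Finset ι} {C : ℝ≥0∞} {T : ι → α → ℝ≥0∞} {J : ι → ℝ≥0∞}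
    (h : ∀ i ∈ s, TendstoUpToFactor C l (T i) (J i)) :
    TendstoUpToFactor C l (fun x => ∑ i ∈ s, T i x) (∑ i ∈ s, J i) := by
  choose! T₀ J₀ tendsto le_T₀ T₀_le le_J₀ J₀_le using h
  refine ⟨fun x => ∑ i ∈ s, T₀ i x, ∑ i ∈ s, J₀ i, tendsto_finsetSum s tendsto, ?_, ?_, ?_, ?_⟩
  · filter_upwards [(eventually_all_finset s).2 le_T₀] with x hx
    exact (Finset.sum_le_sum hx).trans_eq (Finset.mul_sum _ _ _).symm
  · filter_upwards [(eventually_all_finset s).2 T₀_le] with x hx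
    exact (Finset.sum_le_sum hx).trans_eq (Finset.mul_sum _ _ _).symm
  · exact (Finset.sum_le_sum le_J₀).trans_eq (Finset.mul_sum _ _ _).symm
  · exact (Finset.sum_le_sum J₀_le).trans_eq (Finset.mul_sum _ _ _).symm

theorem congr {C : ℝ≥0∞} {T T' : α → ℝ≥0∞} {J : ℝ≥0∞} (h : TendstoUpToFactor C l T J)
    (hT : T =ᶠ[l] T') : TendstoUpToFactor C l T' J := by
  obtain ⟨T₀, J₀, tendsto, le_T₀, T₀_le, hJ⟩ := h
  refine ⟨T₀, J₀, tendsto, ?_, ?_, hJ⟩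
  · filter_upwards [hT, le_T₀] with x hx hle using hx ▸ hle
  · filter_upwards [hT, T₀_le] with x hx hle using hx ▸ hle

theorem limsup_le {C : ℝ≥0∞} (hC : C ≠ ∞) [l.NeBot] {T : α → ℝ≥0∞} {J : ℝ≥0∞}
    (h : TendstoUpToFactor C l T J) : limsup T l ≤ C * C * J := by
  obtain ⟨T₀, J₀, tendsto, le_T₀, -, -, J₀_le⟩ := h
  calc limsup T l ≤ limsup (fun x => C * T₀ x) l := limsup_le_limsup le_T₀
    _ = C * J₀ := (ENNReal.Tendsto.const_mul tendsto (.inr hC)).limsup_eq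
    _ ≤ C * C * J := by rw [mul_assoc]; gcongr

theorem le_liminf {C : ℝ≥0∞} (hC : C ≠ ∞) [l.NeBot] {T : α → ℝ≥0∞} {J : ℝ≥0∞}
    (h : TendstoUpToFactor C l T J) : J ≤ C * C * liminf T l := by
  obtain ⟨T₀, J₀, tendsto, -, T₀_le, le_J₀, -⟩ := h
  calc J ≤ C * liminf T₀ l := by rwa [tendsto.liminf_eq]
    _ ≤ C * liminf (fun x => C * T x) l := by gcongr; exact liminf_le_liminf T₀_le
    _ = C * C * liminf T l := by rw [ENNReal.liminf_const_mul_of_ne_top hC, mul_assoc]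

theorem tendsto [l.NeBot] {T : α → ℝ≥0∞} {J : ℝ≥0∞} (N : ℕ)
    (h : ∀ K : ℝ≥0, 1 < K → TendstoUpToFactor (K ^ N) l T J) : Tendsto T l (𝓝 J) := by
  have pow_ne_top (K : ℝ≥0) : (K : ℝ≥0∞) ^ N ≠ ∞ := ENNReal.pow_ne_top ENNReal.coe_ne_top
  have factor_tendsto (x : ℝ≥0∞) :
      Tendsto (fun K : ℝ≥0 => (K : ℝ≥0∞) ^ N * K ^ N * x) (𝓝[>] 1) (𝓝 x) := by
    have factor : Tendsto (fun K : ℝ≥0 => ((K ^ N * K ^ N : ℝ≥0) : ℝ≥0∞)) (𝓝 1) (𝓝 1) := by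
      have hcont : Continuous fun K : ℝ≥0 => ((K ^ N * K ^ N : ℝ≥0) : ℝ≥0∞) := by fun_prop
      simpa only [one_pow, mul_one, ENNReal.coe_one] using hcont.tendsto 1
    simpa only [ENNReal.coe_mul, ENNReal.coe_pow, one_mul] using
      ENNReal.Tendsto.mul_const (factor.mono_left nhdsWithin_le_nhds) (.inl one_ne_zero)
  have : (𝓝[>] (1 : ℝ≥0)).NeBot := nhdsGT_neBot_of_exists_gt ⟨2, one_lt_two⟩
  refine tendsto_of_le_liminf_of_limsup_le (ge_of_tendsto (factor_tendsto (liminf T l)) ?_)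
    (ge_of_tendsto (factor_tendsto J) ?_)
  · filter_upwards [self_mem_nhdsWithin] with K hK using (h K hK).le_liminf (pow_ne_top K)
  · filter_upwards [self_mem_nhdsWithin] with K hK using (h K hK).limsup_le (pow_ne_top K)

end TendstoUpToFactor

end ApproximateLimits

section Localization

theorem exists_sum_eq_on_isCompact {X ι : Type*} [TopologicalSpace X] [T2Space X]
    [LocallyCompactSpace X] [Fintype ι] {s : ι → Set X} (hs : ∀ i, IsOpen (s i)) {t : Set X}
    (ht : IsCompact t) (hst : t ⊆ ⋃ i, s i) {f : X → ℝ≥0} (hf : Continuous f) :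
    ∃ g : ι → X → ℝ≥0, (∀ i, Continuous (g i)) ∧ (∀ i, HasCompactSupport (g i)) ∧
      (∀ i, tsupport (g i) ⊆ s i) ∧ ∀ x ∈ t, ∑ i, g i x = f x := by
  let σ : Fin (Fintype.card ι) ≃ ι := (Fintype.equivFin ι).symm
  obtain ⟨χ, tsupport_subset, sum_eq_one, mem_Icc, hasCompactSupport⟩ :=
    exists_continuous_sum_one_of_isOpen_isCompact (s := s ∘ σ) (fun i => hs (σ i)) ht
      (by rwa [← σ.surjective.iUnion_comp] at hst)
  have support_subset (i : ι) :
      Function.support (fun x => (χ (σ.symm i) x).toNNReal * f x) ⊆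
        Function.support (χ (σ.symm i)) :=
    fun x hx h => hx (by simp [h])
  refine ⟨fun i x => (χ (σ.symm i) x).toNNReal * f x, fun i => ?_, fun i =>
    (hasCompactSupport _).mono (support_subset i), fun i => ?_, fun x hx => ?_⟩
  · exact (continuous_real_toNNReal.comp (χ (σ.symm i)).continuous).mul hf
  · exact (closure_mono (support_subset i)).trans
      ((tsupport_subset _).trans_eq (congrArg s (σ.apply_symm_apply i)))
  · have h : ∑ i, χ i x = 1 := by simpa using sum_eq_one hx
    rw [← Finset.sum_mul, σ.symm.sum_comp fun j => (χ j x).toNNReal,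
      ← Real.toNNReal_sum_of_nonneg fun i _ => (mem_Icc i x).1, h, Real.toNNReal_one, one_mul]

theorem isCompact_preimage_zero {X H : Type*} [TopologicalSpace X] [NormedAddCommGroup H]
    {F : X → H} (hF : Continuous F) {r : ℝ} (hr : 0 ≤ r)
    (hcompact : IsCompact (F ⁻¹' Metric.closedBall 0 r)) : IsCompact (F ⁻¹' {0}) :=
  hcompact.of_isClosed_subset (isClosed_singleton.preimage hF)
    (Set.preimage_mono (Set.singleton_subset_iff.2 (Metric.mem_closedBall_self hr)))

theorem eventually_preimage_closedBall_subset {X H : Type*} [TopologicalSpace X]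
    [NormedAddCommGroup H] {F : X → H} (hF : Continuous F) {r : ℝ} (hr : 0 < r)
    (hcompact : IsCompact (F ⁻¹' Metric.closedBall 0 r)) {W : Set X} (hW : IsOpen W)
    (hFW : F ⁻¹' {0} ⊆ W) : ∀ᶠ δ in 𝓝[>] (0 : ℝ), F ⁻¹' Metric.closedBall 0 δ ⊆ W := by
  have zero_notMem : (0 : H) ∉ F '' (F ⁻¹' Metric.closedBall 0 r \ W) := by
    rintro ⟨x, hx, h⟩
    exact hx.2 (hFW h)
  obtain ⟨δ₀, hδ₀, subset⟩ := Metric.nhds_basis_closedBall.mem_iff.1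
    (((hcompact.diff hW).image hF).isClosed.isOpen_compl.mem_nhds zero_notMem)
  filter_upwards [Ioo_mem_nhdsGT (lt_min hδ₀ hr)] with δ hδ x hx
  by_contra hxW
  have hxδ : ‖F x‖ ≤ δ := mem_closedBall_zero_iff.1 hx
  exact subset (mem_closedBall_zero_iff.2 (hxδ.trans (hδ.2.le.trans (min_le_left _ _))))
    ⟨x, ⟨mem_closedBall_zero_iff.2 (hxδ.trans (hδ.2.le.trans (min_le_right _ _))), hxW⟩, rfl⟩

end Localization

section Tubes

variable {E H : Type*} [NormedAddCommGroup E] [InnerProductSpace ℝ E] [FiniteDimensional ℝ E]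
  [NormedAddCommGroup H] [InnerProductSpace ℝ H]

section Chart

variable [MeasurableSpace E] [BorelSpace E]

theorem euclideanHausdorffMeasure_ker_inter {L : E →ₗ[ℝ] H} (hL : Function.Surjective L)
    {B : Set E} (hB : MeasurableSet B) :
    μHE[finrank ℝ E - finrank ℝ H] (L ⁻¹' {0} ∩ B) =
      volume ((↑) ⁻¹' B : Set (LinearMap.ker L)) := by
  have h := lintegral_ker_eq_lintegral_preimage_zero hL
    (measurable_one.indicator hB : Measurable (B.indicator (1 : E → ℝ≥0∞)))
  rw [lintegral_indicator_one hB, Measure.restrict_apply hB, Set.inter_comm] at h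
  rw [← h, ← lintegral_indicator_one (measurable_subtype_coe hB)]
  rfl

variable {F : E → H} {L : E →L[ℝ] H} {e : OpenPartialHomeomorph E E} {K : ℝ≥0}

theorem euclideanHausdorffMeasure_fibre_pos (hL : Function.Surjective L)
    (he : ∀ x, L (e x) = F x) (lipschitz : LipschitzOnWith K e e.source)
    {p : E} (hp : p ∈ e.source) (hFp : F p = 0) :
    0 < μHE[finrank ℝ E - finrank ℝ H] (F ⁻¹' {0}) := by
  have ker_pos : 0 < μHE[finrank ℝ E - finrank ℝ H] (L ⁻¹' {0} ∩ e.target) := by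
    rw [← L.coe_coe, euclideanHausdorffMeasure_ker_inter hL e.open_target.measurableSet]
    exact (e.open_target.preimage continuous_subtype_val).measure_pos volume
      ⟨⟨e p, by simp [he, hFp]⟩, e.map_source hp⟩
  have subset_image : L ⁻¹' {0} ∩ e.target ⊆ e '' (F ⁻¹' {0} ∩ e.source) := fun y hy =>
    ⟨e.symm y, ⟨by simpa [← he, e.right_inv hy.2] using hy.1, e.map_target hy.2⟩,
      e.right_inv hy.2⟩
  have image_pos := ker_pos.trans_le ((measure_mono subset_image).trans
    (euclideanHausdorffMeasure_image_le (lipschitz.mono Set.inter_subset_right) _))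
  exact (pos_of_mul_pos_right image_pos zero_le).trans_le (measure_mono Set.inter_subset_left)

theorem euclideanHausdorffMeasure_fibre_finiteAtFilter (hL : Function.Surjective L)
    (he : ∀ x, L (e x) = F x) (lipschitz_symm : LipschitzOnWith K e.symm e.target)
    {p : E} (hp : p ∈ e.source) :
    (μHE[finrank ℝ E - finrank ℝ H] : Measure E).FiniteAtFilter (𝓝[F ⁻¹' {0}] p) := by
  let B := Metric.ball (e p) 1
  have ker_lt_top : μHE[finrank ℝ E - finrank ℝ H] (L ⁻¹' {0} ∩ B) < ∞ := by
    rw [← L.coe_coe, euclideanHausdorffMeasure_ker_inter hL measurableSet_ball]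
    exact (isometry_subtype_coe.antilipschitz.isBounded_preimage
      Metric.isBounded_ball).measure_lt_top
  have subset_image : F ⁻¹' {0} ∩ (e.source ∩ e ⁻¹' B) ⊆ e.symm '' (L ⁻¹' {0} ∩ B ∩ e.target) :=
    fun x hx => ⟨e x, ⟨⟨by simpa [he] using hx.1, hx.2.2⟩, e.map_source hx.2.1⟩,
      e.left_inv hx.2.1⟩
  refine ⟨_, inter_mem_nhdsWithin _ ((e.isOpen_inter_preimage Metric.isOpen_ball).mem_nhds
    ⟨hp, Metric.mem_ball_self one_pos⟩), ?_⟩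
  calc μHE[finrank ℝ E - finrank ℝ H] (F ⁻¹' {0} ∩ (e.source ∩ e ⁻¹' B))
      ≤ K ^ (finrank ℝ E - finrank ℝ H) *
          μHE[finrank ℝ E - finrank ℝ H] (L ⁻¹' {0} ∩ B ∩ e.target) :=
        (measure_mono subset_image).trans
          (euclideanHausdorffMeasure_image_le (lipschitz_symm.mono Set.inter_subset_right) _)
    _ < ∞ := ENNReal.mul_lt_top (ENNReal.pow_lt_top ENNReal.coe_lt_top)
        ((measure_mono Set.inter_subset_left).trans_lt ker_lt_top)

variable [FiniteDimensional ℝ H] [MeasurableSpace H] [BorelSpace H]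

theorem tendstoUpToFactor_tubeIntegral (hF : Measurable F) (hL : Function.Surjective L)
    (he : ∀ x, L (e x) = F x) (hK : 1 ≤ K) (lipschitz : LipschitzOnWith K e e.source)
    (lipschitz_symm : LipschitzOnWith K e.symm e.target) {f : E → ℝ≥0} (hf : Continuous f)
    (hfc : HasCompactSupport f) (hfe : tsupport f ⊆ e.source) :
    TendstoUpToFactor (K ^ finrank ℝ E) (𝓝[>] 0) (tubeIntegral F fun x => f x)
      (tubeDensity (L : E →ₗ[ℝ] H) *
        ∫⁻ x in F ⁻¹' {0}, f x ∂μHE[finrank ℝ E - finrank ℝ H]) := by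
  obtain ⟨φ, hφ, hφc, hφf, φ_support⟩ := exists_compactly_supported_transport e hf hfc hfe
  have he_symm (y : E) (hy : y ∈ e.symm.source) : F (e.symm y) = L y := by
    rw [← he, e.right_inv hy]
  have hφf_symm (y : E) (hy : y ∈ e.symm.source) : (f (e.symm y) : ℝ≥0∞) = φ y := by
    rw [← hφf _ (e.map_target hy), e.right_inv hy]
  have f_support : Function.support (fun x => (f x : ℝ≥0∞)) ⊆ e.source := fun x hx =>
    hfe (subset_tsupport f fun h => hx (by simp [h]))
  have φ_support' : Function.support (fun x => (φ x : ℝ≥0∞)) ⊆ e.symm.source := fun y hy =>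
    φ_support fun h => hy (by simp [h])
  have le_linear (d : ℕ) {S : Set H} (hS : MeasurableSet S) :
      ∫⁻ x in F ⁻¹' S, f x ∂μHE[d] ≤ K ^ d * ∫⁻ y in L ⁻¹' S, φ y ∂μHE[d] :=
    setLIntegral_preimage_le e lipschitz_symm d (fun x _ => he x) (by fun_prop)
      (fun x hx => by rw [hφf x hx]) f_support (hF hS) (L.measurable hS)
  have linear_le (d : ℕ) {S : Set H} (hS : MeasurableSet S) :
      ∫⁻ y in L ⁻¹' S, φ y ∂μHE[d] ≤ K ^ d * ∫⁻ x in F ⁻¹' S, f x ∂μHE[d] :=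
    setLIntegral_preimage_le e.symm lipschitz d he_symm (by fun_prop) hφf_symm φ_support'
      (L.measurable hS) (hF hS)
  have volume_eq : (volume : Measure E) = μHE[finrank ℝ E] :=
    InnerProductSpace.euclideanHausdorffMeasure_eq_volume.symm
  have pow_le : (K : ℝ≥0∞) ^ (finrank ℝ E - finrank ℝ H) ≤ K ^ finrank ℝ E :=
    pow_le_pow_right₀ (by exact_mod_cast hK) (Nat.sub_le _ _)
  refine ⟨_, _, tendsto_tubeIntegral_linear (L := (L : E →ₗ[ℝ] H)) hL hφ hφc,
    .of_forall fun ε => ?_, .of_forall fun ε => ?_, ?_, ?_⟩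
  · rw [tubeIntegral, tubeIntegral, mul_left_comm, volume_eq]
    exact mul_le_mul_right (le_linear _ measurableSet_ball) _
  · rw [tubeIntegral, tubeIntegral, mul_left_comm, volume_eq]
    exact mul_le_mul_right (linear_le _ measurableSet_ball) _
  · rw [mul_left_comm]
    exact mul_le_mul_right ((le_linear _ (measurableSet_singleton 0)).trans (by gcongr; rfl)) _
  · rw [mul_left_comm]
    exact mul_le_mul_right ((linear_le _ (measurableSet_singleton 0)).trans (by gcongr)) _

end Chart

variable [FiniteDimensional ℝ H]

theorem exists_linearizing_chart_of_surjective {F : E → H} {L : E →L[ℝ] H} {p : E}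
    (hF : HasStrictFDerivAt F L p) (hL : Function.Surjective L) {K : ℝ≥0} (hK : 1 < K) :
    ∃ e : OpenPartialHomeomorph E E, p ∈ e.source ∧ (∀ x, L (e x) = F x) ∧
      LipschitzOnWith K e e.source ∧ LipschitzOnWith K e.symm e.target := by
  obtain ⟨R, hR⟩ :=
    (L : E →ₗ[ℝ] H).exists_rightInverse_of_surjective (LinearMap.range_eq_top.2 hL)
  exact exists_linearizing_chart hF (R := LinearMap.toContinuousLinearMap R)
    (LinearMap.congr_fun hR) hK

section RegularZeroSet

variable {F : E → H} {F' : E → E →L[ℝ] H}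
  (hF' : ∀ p, F p = 0 → HasStrictFDerivAt F (F' p) p)
  (hsurj : ∀ p, F p = 0 → Function.Surjective (F' p))

include hF' hsurj

theorem exists_finset_linearizing_charts (hcompact : IsCompact (F ⁻¹' {0})) {K : ℝ≥0}
    (hK : 1 < K) :
    ∃ (s : Finset (F ⁻¹' {0})) (e : F ⁻¹' {0} → OpenPartialHomeomorph E E),
      (F ⁻¹' {0} ⊆ ⋃ p : s, (e p).source) ∧ ∀ p : F ⁻¹' {0}, (∀ x, F' p (e p x) = F x) ∧
        LipschitzOnWith K (e p) (e p).source ∧ LipschitzOnWith K (e p).symm (e p).target := by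
  choose e mem_source he using fun p : F ⁻¹' {0} =>
    exists_linearizing_chart_of_surjective (hF' p p.2) (hsurj p p.2) hK
  obtain ⟨s, cover⟩ := hcompact.elim_nhds_subcover' (fun p hp => (e ⟨p, hp⟩).source)
    fun p hp => (e ⟨p, hp⟩).open_source.mem_nhds (mem_source ⟨p, hp⟩)
  exact ⟨s, e, by rwa [Set.iUnion_subtype], he⟩

variable [MeasurableSpace E] [BorelSpace E]

theorem euclideanHausdorffMeasure_zeroSet_pos (hne : (F ⁻¹' {0}).Nonempty) :
    0 < μHE[finrank ℝ E - finrank ℝ H] (F ⁻¹' {0}) := by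
  obtain ⟨p, hp⟩ := hne
  obtain ⟨e, hpe, he, lipschitz, -⟩ :=
    exists_linearizing_chart_of_surjective (hF' p hp) (hsurj p hp) one_lt_two
  exact euclideanHausdorffMeasure_fibre_pos (hsurj p hp) he lipschitz hpe hp

theorem euclideanHausdorffMeasure_zeroSet_lt_top (hcompact : IsCompact (F ⁻¹' {0})) :
    μHE[finrank ℝ E - finrank ℝ H] (F ⁻¹' {0}) < ∞ := by
  refine hcompact.measure_lt_top_of_nhdsWithin fun p hp => ?_
  obtain ⟨e, hpe, he, -, lipschitz_symm⟩ :=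
    exists_linearizing_chart_of_surjective (hF' p hp) (hsurj p hp) one_lt_two
  exact euclideanHausdorffMeasure_fibre_finiteAtFilter (hsurj p hp) he lipschitz_symm hpe

theorem tendsto_tubeIntegral [MeasurableSpace H] [BorelSpace H] (hF : Continuous F) {r : ℝ}
    (hr : 0 < r) (hcompact : IsCompact (F ⁻¹' Metric.closedBall 0 r)) {c : ℝ≥0∞}
    (hc : ∀ p, F p = 0 → tubeDensity (F' p : E →ₗ[ℝ] H) = c) {f : E → ℝ≥0} (hf : Continuous f) :
    Tendsto (tubeIntegral F fun x => f x) (𝓝[>] 0)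
      (𝓝 (c * ∫⁻ x in F ⁻¹' {0}, f x ∂μHE[finrank ℝ E - finrank ℝ H])) := by
  refine TendstoUpToFactor.tendsto (finrank ℝ E) fun K hK => ?_
  obtain ⟨s, e, cover, he⟩ := exists_finset_linearizing_charts hF' hsurj
    (isCompact_preimage_zero hF hr.le hcompact) hK
  have hU (p : s) : IsOpen (e p).source := (e p).open_source
  obtain ⟨δ, tube_subset, hδ⟩ := ((eventually_preimage_closedBall_subset hF hr hcompact
    (isOpen_iUnion hU) cover).and (Ioo_mem_nhdsGT hr)).exists
  have tube_compact : IsCompact (F ⁻¹' Metric.closedBall 0 δ) :=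
    hcompact.of_isClosed_subset (Metric.isClosed_closedBall.preimage hF)
      (Set.preimage_mono (Metric.closedBall_subset_closedBall hδ.2.le))
  obtain ⟨g, hg, hgc, hgU, sum_g⟩ := exists_sum_eq_on_isCompact hU tube_compact tube_subset hf
  have sum_lintegral (μ : Measure E) {S : Set H} (hS : MeasurableSet S)
      (hSδ : S ⊆ Metric.closedBall 0 δ) :
      ∑ p, ∫⁻ x in F ⁻¹' S, g p x ∂μ = ∫⁻ x in F ⁻¹' S, f x ∂μ := by
    rw [← lintegral_finsetSum _ fun p _ => by fun_prop]
    refine setLIntegral_congr_fun (hF.measurable hS) fun x hx => ?_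
    exact_mod_cast congrArg ((↑) : ℝ≥0 → ℝ≥0∞) (sum_g x (hSδ hx))
  have local_limits := TendstoUpToFactor.sum (s := Finset.univ) fun (p : s) _ =>
    tendstoUpToFactor_tubeIntegral hF.measurable (hsurj p.1 p.1.2) (he p).1 hK.le
      (he p).2.1 (he p).2.2 (hg p) (hgc p) (hgU p)
  have limit_eq : ∑ p : s, tubeDensity (F' p.1 : E →ₗ[ℝ] H) *
      ∫⁻ x in F ⁻¹' {0}, g p x ∂μHE[finrank ℝ E - finrank ℝ H] =
      c * ∫⁻ x in F ⁻¹' {0}, f x ∂μHE[finrank ℝ E - finrank ℝ H] := by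
    simp_rw [fun p : s => hc p.1 p.1.2, ← Finset.mul_sum]
    rw [sum_lintegral _ (measurableSet_singleton 0)
      (Set.singleton_subset_iff.2 (Metric.mem_closedBall_self hδ.1.le))]
  rw [← limit_eq]
  refine local_limits.congr ?_
  filter_upwards [Ioo_mem_nhdsGT hδ.1] with ε hε
  simp_rw [tubeIntegral, ← Finset.mul_sum]
  rw [sum_lintegral _ measurableSet_ball
    ((Metric.ball_subset_ball hε.2.le).trans Metric.ball_subset_closedBall)]

end RegularZeroSet

end Tubes

section Averages

section WeakLimits

variable {X α : Type*} [TopologicalSpace X] [MeasurableSpace X]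
  {l : Filter α} {μ : α → Measure X} {ν : Measure X}
  (h : ∀ f : X → ℝ≥0, Continuous f → Tendsto (fun a => ∫⁻ x, f x ∂μ a) l (𝓝 (∫⁻ x, f x ∂ν)))

include h

theorem tendsto_integral_real_of_tendsto_lintegral {f : X → ℝ} (hf : Continuous f)
    (hμ : ∀ᶠ a in l, Integrable f (μ a)) (hν : Integrable f ν) :
    Tendsto (fun a => ∫ x, f x ∂μ a) l (𝓝 (∫ x, f x ∂ν)) := by
  have positive_part := (ENNReal.tendsto_toReal hν.lintegral_lt_top.ne).comp
    (h (fun x => (f x).toNNReal) (by fun_prop))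
  have negative_part := (ENNReal.tendsto_toReal hν.neg.lintegral_lt_top.ne).comp
    (h (fun x => (-f x).toNNReal) (by fun_prop))
  rw [integral_eq_lintegral_pos_part_sub_lintegral_neg_part hν]
  refine (positive_part.sub negative_part).congr' ?_
  filter_upwards [hμ] with a ha
  rw [integral_eq_lintegral_pos_part_sub_lintegral_neg_part ha]
  rfl

theorem tendsto_integral_of_tendsto_lintegral {𝕜 : Type*} [RCLike 𝕜] {f : X → 𝕜}
    (hf : Continuous f) (hμ : ∀ᶠ a in l, Integrable f (μ a)) (hν : Integrable f ν) :
    Tendsto (fun a => ∫ x, f x ∂μ a) l (𝓝 (∫ x, f x ∂ν)) := by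
  have re := tendsto_integral_real_of_tendsto_lintegral h (RCLike.continuous_re.comp hf)
    (hμ.mono fun _ => Integrable.re) hν.re
  have im := tendsto_integral_real_of_tendsto_lintegral h (RCLike.continuous_im.comp hf)
    (hμ.mono fun _ => Integrable.im) hν.im
  rw [← integral_re_add_im hν]
  refine (((RCLike.continuous_ofReal.tendsto _).comp re).add
    (((RCLike.continuous_ofReal.tendsto _).comp im).mul_const RCLike.I)).congr' ?_
  filter_upwards [hμ] with a ha using integral_re_add_im ha

end WeakLimits

theorem setAverage_eq_div {X 𝕜 : Type*} [MeasurableSpace X] [RCLike 𝕜] (μ : Measure X) (s : Set X)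
    (f : X → 𝕜) : ⨍ x in s, f x ∂μ = (∫ x in s, f x ∂μ) / ((μ s).toReal : 𝕜) := by
  rw [setAverage_eq, measureReal_def, RCLike.real_smul_eq_coe_mul, RCLike.ofReal_inv, mul_comm,
    div_eq_mul_inv]

theorem average_smul_measure {X G : Type*} [MeasurableSpace X] [NormedAddCommGroup G]
    [NormedSpace ℝ G] (μ : Measure X) (f : X → G) {c : ℝ≥0} (hc : c ≠ 0) :
    ⨍ x, f x ∂(c • μ) = ⨍ x, f x ∂μ := by
  rw [average_eq', average_eq', Measure.smul_apply, ENNReal.smul_def, ENNReal.smul_def, smul_smul,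
    smul_eq_mul, ENNReal.mul_inv (.inl (by simpa)) (.inl ENNReal.coe_ne_top), mul_right_comm,
    ENNReal.inv_mul_cancel (by simpa) ENNReal.coe_ne_top, one_mul]

theorem setAverage_euclideanHausdorffMeasure {X G : Type*} [EMetricSpace X] [MeasurableSpace X]
    [BorelSpace X] [NormedAddCommGroup G] [NormedSpace ℝ G] (d : ℕ) (s : Set X) (f : X → G) :
    ⨍ x in s, f x ∂μHE[d] = ⨍ x in s, f x ∂μH[d] := by
  rw [Measure.euclideanHausdorffMeasure_def, Measure.restrict_smul, average_smul_measure _ _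
    (Measure.addHaarScalarFactor_volume_hausdorffMeasure_ne_zero d)]

theorem setAverage_map {X Y G : Type*} [MeasurableSpace X] [MeasurableSpace Y]
    [NormedAddCommGroup G] [NormedSpace ℝ G] {μ : Measure X} {e : X → Y}
    (he : MeasurableEmbedding e) (f : Y → G) (s : Set Y) :
    ⨍ y in s, f y ∂μ.map e = ⨍ x in e ⁻¹' s, f (e x) ∂μ := by
  rw [setAverage_eq, setAverage_eq, he.setIntegral_map, measureReal_def, measureReal_def,
    he.map_apply]

theorem setAverage_hausdorffMeasure_eq_preimage {X Y G : Type*} [EMetricSpace X]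
    [MeasurableSpace X] [BorelSpace X] [CompleteSpace X] [EMetricSpace Y] [MeasurableSpace Y]
    [BorelSpace Y] [NormedAddCommGroup G] [NormedSpace ℝ G] {e : X → Y} (he : Isometry e) {d : ℝ}
    (hd : 0 ≤ d) {s : Set Y} (hs : s ⊆ Set.range e) (f : Y → G) :
    ⨍ y in s, f y ∂μH[d] = ⨍ x in e ⁻¹' s, f (e x) ∂μH[d] := by
  rw [← setAverage_map he.isClosedEmbedding.measurableEmbedding,
    he.map_hausdorffMeasure (.inl hd), Measure.restrict_restrict_of_subset hs]

theorem integrableOn_of_isCompact_of_measure_ne_top {X G : Type*} [TopologicalSpace X] [T2Space X]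
    [MeasurableSpace X] [OpensMeasurableSpace X] [NormedAddCommGroup G] {μ : Measure X} {s : Set X}
    (hs : IsCompact s) (hμs : μ s ≠ ∞) {f : X → G} (hf : ContinuousOn f s) :
    IntegrableOn f s μ := by
  obtain ⟨B, hB⟩ := (hs.image_of_continuousOn hf.norm).bddAbove
  exact .of_bound hμs.lt_top (hf.aestronglyMeasurable_of_isCompact hs hs.measurableSet) B
    ((ae_restrict_iff' hs.measurableSet).2
      (.of_forall fun x hx => hB (Set.mem_image_of_mem _ hx)))

section RegularZeroSet

variable {E H : Type*} [NormedAddCommGroup E] [InnerProductSpace ℝ E] [FiniteDimensional ℝ E]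
  [MeasurableSpace E] [BorelSpace E] [NormedAddCommGroup H] [InnerProductSpace ℝ H]
  [FiniteDimensional ℝ H] [MeasurableSpace H] [BorelSpace H]
  {F : E → H} (hF : Continuous F) {r : ℝ} (hr : 0 < r)
  (hcompact : IsCompact (F ⁻¹' Metric.closedBall 0 r)) (hne : (F ⁻¹' {0}).Nonempty)
  {F' : E → E →L[ℝ] H} (hF' : ∀ p, F p = 0 → HasStrictFDerivAt F (F' p) p)
  (hsurj : ∀ p, F p = 0 → Function.Surjective (F' p)) {c : ℝ≥0∞}
  (hc : ∀ p, F p = 0 → tubeDensity (F' p : E →ₗ[ℝ] H) = c)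

include hF hr hcompact hne hF' hsurj hc

theorem tendsto_setLAverage_tube {f : E → ℝ≥0} (hf : Continuous f) :
    Tendsto (fun ε => ⨍⁻ x in F ⁻¹' Metric.ball 0 ε, f x ∂volume) (𝓝[>] 0)
      (𝓝 (⨍⁻ x in F ⁻¹' {0}, f x ∂μHE[finrank ℝ E - finrank ℝ H])) := by
  obtain ⟨p, hp⟩ := hne
  have hc₀ : c ≠ 0 := hc p hp ▸ tubeDensity_ne_zero _
  have hc_top : c ≠ ∞ := hc p hp ▸ tubeDensity_ne_top (hsurj p hp)
  have zero_pos := euclideanHausdorffMeasure_zeroSet_pos hF' hsurj ⟨p, hp⟩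
  have zero_lt_top := euclideanHausdorffMeasure_zeroSet_lt_top hF' hsurj
    (isCompact_preimage_zero hF hr.le hcompact)
  have integral_f := tendsto_tubeIntegral hF' hsurj hF hr hcompact hc hf
  have integral_one := tendsto_tubeIntegral hF' hsurj hF hr hcompact hc
    (continuous_const (y := (1 : ℝ≥0)))
  simp only [ENNReal.coe_one, setLIntegral_one] at integral_one
  have quotient := ENNReal.Tendsto.div integral_f (.inr (mul_ne_zero hc₀ zero_pos.ne'))
    integral_one (.inl (ENNReal.mul_ne_top hc_top zero_lt_top.ne))
  rw [ENNReal.mul_div_mul_left _ _ hc₀ hc_top, ← setLAverage_eq] at quotient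
  refine quotient.congr' ?_
  filter_upwards [self_mem_nhdsWithin] with ε hε
  have scale_ne_zero : ENNReal.ofReal ε ^ finrank ℝ H ≠ 0 :=
    pow_ne_zero _ (ENNReal.ofReal_pos.2 hε).ne'
  rw [tubeIntegral, tubeIntegral, setLIntegral_one, setLAverage_eq,
    ENNReal.mul_div_mul_left _ _ (ENNReal.inv_ne_zero.2 (ENNReal.pow_ne_top ENNReal.ofReal_ne_top))
      (ENNReal.inv_ne_top.2 scale_ne_zero)]

theorem tendsto_setAverage_tube (μ : Measure E) [μ.IsAddHaarMeasure] {𝕜 : Type*} [RCLike 𝕜]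
    {f : E → 𝕜} (hf : Continuous f) :
    Tendsto (fun ε => ⨍ x in F ⁻¹' Metric.ball 0 ε, f x ∂μ) (𝓝[>] 0)
      (𝓝 (⨍ x in F ⁻¹' {0}, f x ∂μH[(finrank ℝ E - finrank ℝ H : ℕ)])) := by
  have zero_compact := isCompact_preimage_zero hF hr.le hcompact
  have average_volume (s : Set E) : ⨍ x in s, f x ∂μ = ⨍ x in s, f x := by
    rw [μ.isAddLeftInvariant_eq_smul volume, Measure.restrict_smul, average_smul_measure _ _
      (Measure.addHaarScalarFactor_pos_of_isAddHaarMeasure _ _).ne']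
  simp_rw [average_volume, ← setAverage_euclideanHausdorffMeasure]
  refine tendsto_integral_of_tendsto_lintegral
    (fun g hg => tendsto_setLAverage_tube hF hr hcompact hne hF' hsurj hc hg) hf ?_ ?_
  · filter_upwards [Ioo_mem_nhdsGT hr] with ε hε
    exact ((hf.continuousOn.integrableOn_compact hcompact).mono_set (Set.preimage_mono
      ((Metric.ball_subset_ball hε.2.le).trans Metric.ball_subset_closedBall))).to_average
  · exact (integrableOn_of_isCompact_of_measure_ne_top zero_compact
      (euclideanHausdorffMeasure_zeroSet_lt_top hF' hsurj zero_compact).ne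
        hf.continuousOn).to_average

end RegularZeroSet

end Averages

section NormalJacobian

theorem det_one_sub_comp_comm {R X Y : Type*} [CommRing R] [AddCommGroup X] [Module R X]
    [Module.Free R X] [Module.Finite R X] [AddCommGroup Y] [Module R Y] [Module.Free R Y]
    [Module.Finite R Y] (a : X →ₗ[R] Y) (b : Y →ₗ[R] X) :
    LinearMap.det (1 - a ∘ₗ b) = LinearMap.det (1 - b ∘ₗ a) := by
  classical
  let v := Module.Free.chooseBasis R X
  let w := Module.Free.chooseBasis R Y
  rw [← LinearMap.det_toMatrix w, ← LinearMap.det_toMatrix v, map_sub, map_sub,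
    LinearMap.toMatrix_one, LinearMap.toMatrix_one, LinearMap.toMatrix_comp w v w,
    LinearMap.toMatrix_comp v w v, Matrix.det_one_sub_mul_comm]

theorem surjective_of_det_comp_ne_zero {R V W : Type*} [Field R] [AddCommGroup V] [Module R V]
    [AddCommGroup W] [Module R W] [FiniteDimensional R W] {a : V →ₗ[R] W} {b : W →ₗ[R] V}
    (h : LinearMap.det (a ∘ₗ b) ≠ 0) : Function.Surjective a :=
  Function.Surjective.of_comp (g := b) (LinearMap.equivOfDetNeZero _ h).surjective

variable {𝕜 M M' : Type*} [RCLike 𝕜] [NormedAddCommGroup M] [InnerProductSpace 𝕜 M]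
  [NormedAddCommGroup M'] [InnerProductSpace 𝕜 M'] [FiniteDimensional 𝕜 M']
  (N : Submodule 𝕜 M) (K : Submodule 𝕜 M') (A : M ≃ₗᵢ[𝕜] M')

/-- The compression of an isometry `A` to subspaces `N` and `K` of its source and target: the
restriction of `A` to `N` followed by the orthogonal projection to `K`. -/
def compression : N →ₗ[𝕜] K :=
  (K.orthogonalProjectionOnto : M' →ₗ[𝕜] K) ∘ₗ (A.toLinearEquiv : M →ₗ[𝕜] M') ∘ₗ N.subtype

variable {N K A}

theorem coe_compression_apply (y : N) : (compression N K A y : M') = K.starProjection (A y) :=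
  rfl

variable (N K A) [FiniteDimensional 𝕜 M]

theorem adjoint_compression :
    LinearMap.adjoint (compression N K A) = compression K N A.symm := by
  refine ((LinearMap.eq_adjoint_iff _ _).2 fun z y => ?_).symm
  rw [Submodule.coe_inner, Submodule.coe_inner, coe_compression_apply, coe_compression_apply,
    Submodule.inner_starProjection_left_eq_right, Submodule.starProjection_eq_self_iff.2 y.2,
    ← Submodule.inner_starProjection_left_eq_right, Submodule.starProjection_eq_self_iff.2 z.2,
    ← A.inner_map_map, A.apply_symm_apply]

theorem compression_comp_compression_symm :
    compression N K A ∘ₗ compression K N A.symm =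
      1 - compression Nᗮ K A ∘ₗ compression K Nᗮ A.symm := by
  ext z
  simp only [LinearMap.comp_apply, LinearMap.sub_apply, Module.End.one_apply, Submodule.coe_sub,
    coe_compression_apply]
  rw [eq_sub_iff_add_eq, ← map_add, ← map_add,
    Submodule.starProjection_add_starProjection_orthogonal, A.apply_symm_apply,
    Submodule.starProjection_eq_self_iff.2 z.2]

variable {N K}

theorem det_compression_symm_comp_adjoint {B : M' ≃ₗᵢ[𝕜] M} {r : 𝕜}
    (h : compression K Nᗮ B ∘ₗ compression Nᗮ K B.symm = r • 1) :
    LinearMap.det (compression N K B.symm ∘ₗ LinearMap.adjoint (compression N K B.symm)) =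
      (1 - r) ^ finrank 𝕜 Nᗮ := by
  rw [adjoint_compression, compression_comp_compression_symm, B.symm_symm, det_one_sub_comp_comm, h,
    show (1 : Nᗮ →ₗ[𝕜] Nᗮ) - r • 1 = (1 - r) • 1 by module,
    LinearMap.det_smul, map_one, mul_one]

theorem det_smul_comp_adjoint_smul {E H : Type*} [NormedAddCommGroup E] [InnerProductSpace 𝕜 E]
    [FiniteDimensional 𝕜 E] [NormedAddCommGroup H] [InnerProductSpace 𝕜 H]
    [FiniteDimensional 𝕜 H] (c : 𝕜) (L : E →ₗ[𝕜] H) :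
    LinearMap.det ((c • L) ∘ₗ LinearMap.adjoint (c • L)) =
      (c * starRingEnd 𝕜 c) ^ finrank 𝕜 H * LinearMap.det (L ∘ₗ LinearMap.adjoint L) := by
  rw [map_smulₛₗ, LinearMap.smul_comp, LinearMap.comp_smul, smul_smul, LinearMap.det_smul]

theorem tubeDensity_eq_of_det_comp_adjoint_eq {E H : Type*} [NormedAddCommGroup E]
    [InnerProductSpace ℝ E] [FiniteDimensional ℝ E] [NormedAddCommGroup H]
    [InnerProductSpace ℝ H] [FiniteDimensional ℝ H] [MeasurableSpace H] [BorelSpace H]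
    {L : E →ₗ[ℝ] H} {a : ℝ} (h : LinearMap.det (L ∘ₗ LinearMap.adjoint L) = a) :
    tubeDensity L = volume (Metric.ball (0 : H) 1) / ENNReal.ofReal √a := by
  rw [tubeDensity, ← h, ← normDet_adjoint_sq, Real.sqrt_sq L.adjoint.normDet_nonneg]

end NormalJacobian

section PatternedUnitary

open scoped Matrix.Norms.Frobenius

/-- A Ferrers relation in the sense of Riguet, used here as a zero pattern of matrices. Nonempty
rows are pairwise comparable: two cells force one of the opposite corners of the rectangle they
span. -/
def IsFerrers {α β : Type*} (S : Set (α × β)) : Prop :=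
  ∀ ⦃i j k l⦄, (i, j) ∈ S → (l, k) ∈ S → (i, k) ∈ S ∨ (l, j) ∈ S

section PatternMatrix

variable {ι : Type*} {S : Set (ι × ι)}

variable (S) in
/-- The matrix with the given entries outside `S` and zero entries on `S`. -/
def patternMatrix (x : {p // p ∉ S} → ℂ) : Matrix ι ι ℂ :=
  Matrix.of fun i j => Function.extend (Subtype.val : {p // p ∉ S} → ι × ι) x 0 (i, j)

theorem patternMatrix_apply_of_mem (x : {p // p ∉ S} → ℂ) {p : ι × ι} (hp : p ∈ S) :
    patternMatrix S x p.1 p.2 = 0 :=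
  Function.extend_apply' (f := Subtype.val) x 0 p fun ⟨q, hq⟩ => q.2 (hq ▸ hp)

theorem patternMatrix_apply_subtype (x : {p // p ∉ S} → ℂ) (p : {p // p ∉ S}) :
    patternMatrix S x p.1.1 p.1.2 = x p :=
  Subtype.val_injective.extend_apply x 0 p

end PatternMatrix

variable {ι : Type*} [Fintype ι]

/-- Square complex matrices with the inner product of the Frobenius norm, encoded as a Euclidean
space so that it carries its Hausdorff measures. -/
abbrev MatSpace (ι : Type*) := EuclideanSpace ℂ (ι × ι)

variable (ι) in
/-- The isometric identification of `MatSpace ι` with Mathlib's matrices. -/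
def matrixEquiv : MatSpace ι ≃ₗᵢ[ℝ] Matrix ι ι ℂ where
  toFun X := Matrix.of fun i j => X (i, j)
  invFun A := WithLp.toLp 2 fun p => A p.1 p.2
  map_add' _ _ := rfl
  map_smul' _ _ := rfl
  left_inv _ := rfl
  right_inv _ := rfl
  norm_map' X := by
    rw [EuclideanSpace.norm_eq, Matrix.frobenius_norm_def, Real.sqrt_eq_rpow,
      Fintype.sum_prod_type]
    simp only [Real.rpow_ofNat]
    rfl

theorem matrixEquiv_apply (X : MatSpace ι) (i j : ι) : matrixEquiv ι X i j = X (i, j) := rfl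

theorem inner_eq_re_trace (X Y : MatSpace ι) :
    inner ℝ X Y = (Matrix.trace ((matrixEquiv ι X)ᴴ * matrixEquiv ι Y)).re := by
  rw [PiLp.inner_apply, Fintype.sum_prod_type_right, Matrix.trace, Complex.re_sum]
  refine Finset.sum_congr rfl fun j _ => ?_
  rw [Matrix.diag_apply, Matrix.mul_apply, Complex.re_sum]
  refine Finset.sum_congr rfl fun i _ => ?_
  rw [Complex.inner, mul_comm]
  rfl

section Hermitian

variable (ι) in
/-- The real vector space of Hermitian matrices. -/
def hermitianSpace : Submodule ℝ (MatSpace ι) where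
  carrier := {X | (matrixEquiv ι X).IsHermitian}
  add_mem' {X Y} hX hY := by simpa using hX.add hY
  zero_mem' := by simp
  smul_mem' c X hX := by
    simpa using Matrix.IsHermitian.smul hX (IsSelfAdjoint.all c)

theorem mem_hermitianSpace {X : MatSpace ι} :
    X ∈ hermitianSpace ι ↔ (matrixEquiv ι X).IsHermitian := Iff.rfl

theorem matrixEquiv_starProjection_hermitianSpace (Z : MatSpace ι) :
    matrixEquiv ι ((hermitianSpace ι).starProjection Z) =
      (1 / 2 : ℝ) • (matrixEquiv ι Z + (matrixEquiv ι Z)ᴴ) := by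
  rw [← LinearIsometryEquiv.eq_symm_apply]
  refine Submodule.eq_starProjection_of_mem_of_inner_eq_zero ?_ fun W hW => ?_
  · rw [mem_hermitianSpace, LinearIsometryEquiv.apply_symm_apply]
    exact .smul (Matrix.isHermitian_add_transpose_self _) (IsSelfAdjoint.all _)
  · rw [inner_eq_re_trace, map_sub, LinearIsometryEquiv.apply_symm_apply]
    set z := matrixEquiv ι Z
    set w := matrixEquiv ι W
    have skew_part : z - (1 / 2 : ℝ) • (z + zᴴ) = (1 / 2 : ℝ) • (z - zᴴ) := by module
    have re_trace_comm : (Matrix.trace (zᴴ * w)).re = (Matrix.trace (z * w)).re := by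
      rw [← Complex.conj_re, starRingEnd_apply, ← Matrix.trace_conjTranspose,
        Matrix.conjTranspose_mul, Matrix.conjTranspose_conjTranspose, (mem_hermitianSpace.1 hW).eq,
        Matrix.trace_mul_comm]
    rw [skew_part, Matrix.conjTranspose_smul, Matrix.conjTranspose_sub,
      Matrix.conjTranspose_conjTranspose, Matrix.smul_mul, Matrix.trace_smul, Matrix.sub_mul,
      Matrix.trace_sub, Complex.smul_re, Complex.sub_re, re_trace_comm, sub_self, smul_zero]

theorem mem_hermitianSpace_orthogonal {X : MatSpace ι} :
    X ∈ (hermitianSpace ι)ᗮ ↔ (matrixEquiv ι X)ᴴ = -matrixEquiv ι X := by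
  rw [← Submodule.starProjection_apply_eq_zero_iff, ← (matrixEquiv ι).map_eq_zero_iff,
    matrixEquiv_starProjection_hermitianSpace, smul_eq_zero_iff_right (by norm_num), add_comm,
    add_eq_zero_iff_eq_neg]

variable (ι) in
/-- Multiplication by the imaginary unit, which exchanges Hermitian and skew-Hermitian matrices. -/
def hermitianEquivOrthogonal : hermitianSpace ι ≃ₗ[ℝ] (hermitianSpace ι)ᗮ where
  toFun X := ⟨Complex.I • (X : MatSpace ι), by
    rw [mem_hermitianSpace_orthogonal]
    change (Complex.I • matrixEquiv ι X)ᴴ = -(Complex.I • matrixEquiv ι X)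
    rw [Matrix.conjTranspose_smul, (mem_hermitianSpace.1 X.2).eq]
    simp⟩
  invFun X := ⟨-(Complex.I • (X : MatSpace ι)), by
    rw [mem_hermitianSpace]
    change (-(Complex.I • matrixEquiv ι X))ᴴ = -(Complex.I • matrixEquiv ι X)
    rw [Matrix.conjTranspose_neg, Matrix.conjTranspose_smul, mem_hermitianSpace_orthogonal.1 X.2]
    simp⟩
  map_add' X Y := Subtype.ext (smul_add Complex.I (X : MatSpace ι) Y)
  map_smul' c X := Subtype.ext (smul_comm Complex.I c (X : MatSpace ι))
  left_inv X := Subtype.ext (by simp [smul_smul])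
  right_inv X := Subtype.ext (by simp [smul_smul])

theorem finrank_hermitianSpace : finrank ℝ (hermitianSpace ι) = Fintype.card ι ^ 2 := by
  have add_orthogonal := (hermitianSpace ι).finrank_add_finrank_orthogonal
  have eq_orthogonal := (hermitianEquivOrthogonal ι).finrank_eq
  have total : finrank ℝ (MatSpace ι) = 2 * Fintype.card ι ^ 2 := by
    rw [← finrank_mul_finrank ℝ ℂ (MatSpace ι), Complex.finrank_real_complex,
      finrank_euclideanSpace, Fintype.card_prod, sq]
  omega

end Hermitian

section Pattern

/-- The matrices vanishing on the cells of `S`, as a real vector space. -/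
def patternSpace (S : Set (ι × ι)) : Submodule ℝ (MatSpace ι) where
  carrier := {X | ∀ p ∈ S, X p = 0}
  add_mem' hX hY p hp := by simp [hX p hp, hY p hp]
  zero_mem' _ _ := rfl
  smul_mem' c X hX p hp := by simp [hX p hp]

variable {S : Set (ι × ι)}

theorem apply_eq_zero_of_mem_patternSpace_orthogonal {B : MatSpace ι} (hB : B ∈ (patternSpace S)ᗮ)
    {p : ι × ι} (hp : p ∉ S) : B p = 0 := by
  classical
  have single_mem : EuclideanSpace.single p (B p) ∈ patternSpace S := fun q hq => by
    rw [PiLp.single_apply, if_neg (by rintro rfl; exact hp hq)]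
  have orthogonal := (Submodule.mem_orthogonal _ _).1 hB _ single_mem
  rw [PiLp.inner_apply, Finset.sum_eq_single p (fun q _ hq => by simp [hq]) (by simp),
    PiLp.single_apply, if_pos rfl] at orthogonal
  exact inner_self_eq_zero.1 orthogonal

/-- In a nonzero term `V i k * conj (B l k) * V l j` of an entry `(i, j)` in the pattern, the cell
`(l, k)` would lie in the pattern too, but neither `(i, k)` nor `(l, j)` would. -/
theorem mul_conjTranspose_mul_mem_patternSpace (hS : IsFerrers S) {V B : MatSpace ι}
    (hV : V ∈ patternSpace S) (hB : B ∈ (patternSpace S)ᗮ) :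
    (matrixEquiv ι).symm (matrixEquiv ι V * (matrixEquiv ι B)ᴴ * matrixEquiv ι V) ∈
      patternSpace S := by
  rintro ⟨i, j⟩ hij
  rw [← matrixEquiv_apply, LinearIsometryEquiv.apply_symm_apply, Matrix.mul_apply]
  refine Finset.sum_eq_zero fun l _ => ?_
  rw [Matrix.mul_apply, Finset.sum_mul]
  refine Finset.sum_eq_zero fun k _ => ?_
  rw [Matrix.conjTranspose_apply, matrixEquiv_apply, matrixEquiv_apply, matrixEquiv_apply]
  by_cases hlk : (l, k) ∈ S
  · obtain hik | hlj := hS hij hlk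
    · rw [hV _ hik, zero_mul, zero_mul]
    · rw [hV _ hlj, mul_zero]
  · rw [apply_eq_zero_of_mem_patternSpace_orthogonal hB hlk, star_zero, mul_zero, zero_mul]

variable (S) in
/-- The coordinates on `patternSpace S` given by the entries outside `S`. -/
def patternCoord : patternSpace S ≃ₗ[ℝ] ({p // p ∉ S} → ℂ) where
  toFun y p := (y : MatSpace ι) p.1
  invFun x := ⟨(matrixEquiv ι).symm (patternMatrix S x), fun _ hp =>
    patternMatrix_apply_of_mem x hp⟩
  map_add' _ _ := rfl
  map_smul' _ _ := rfl
  left_inv y := by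
    ext p
    by_cases hp : p ∈ S
    · exact (patternMatrix_apply_of_mem _ hp).trans (y.2 p hp).symm
    · exact patternMatrix_apply_subtype _ ⟨p, hp⟩
  right_inv x := funext (patternMatrix_apply_subtype x)

variable (S) in
theorem finrank_patternSpace :
    finrank ℝ (patternSpace S) + 2 * S.ncard = 2 * Fintype.card ι ^ 2 := by
  classical
  have card_add_card_compl := S.ncard_add_ncard_compl
  rw [← Nat.card_coe_set_eq Sᶜ, Nat.card_eq_fintype_card, Nat.card_eq_fintype_card,
    Fintype.card_prod, ← sq] at card_add_card_compl
  rw [(patternCoord S).finrank_eq, ← finrank_mul_finrank ℝ ℂ, Complex.finrank_real_complex,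
    finrank_fintype_fun_eq_card, ← card_add_card_compl, mul_add, add_comm]
  rfl

end Pattern

section Defect

variable (ι) in
/-- The real-bilinear map `(X, Y) ↦ X* Y`. -/
def conjTransposeMul : MatSpace ι →L[ℝ] MatSpace ι →L[ℝ] MatSpace ι :=
  LinearMap.toContinuousBilinearMap <| LinearMap.mk₂ ℝ
    (fun X Y => (matrixEquiv ι).symm ((matrixEquiv ι X)ᴴ * matrixEquiv ι Y))
    (fun X X' Y => by rw [map_add, Matrix.conjTranspose_add, Matrix.add_mul, map_add])
    (fun c X Y => by
      rw [map_smul, Matrix.conjTranspose_smul, Matrix.smul_mul, map_smul, star_trivial])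
    (fun X Y Y' => by rw [map_add, Matrix.mul_add, map_add])
    (fun c X Y => by rw [map_smul, Matrix.mul_smul, map_smul])

theorem matrixEquiv_conjTransposeMul (X Y : MatSpace ι) :
    matrixEquiv ι (conjTransposeMul ι X Y) = (matrixEquiv ι X)ᴴ * matrixEquiv ι Y := rfl

variable [DecidableEq ι] {S : Set (ι × ι)}

/-- The defect `Y* Y - 1` of unitarity on `patternSpace S`. Its value is Hermitian already; the
orthogonal projection only serves to land in the subspace. -/
def defect (y : patternSpace S) : hermitianSpace ι :=
  (hermitianSpace ι).orthogonalProjectionOnto (conjTransposeMul ι y y - (matrixEquiv ι).symm 1)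

theorem matrixEquiv_defect (y : patternSpace S) :
    matrixEquiv ι (defect y) = (matrixEquiv ι y)ᴴ * matrixEquiv ι y - 1 := by
  have coe_defect : (defect y : MatSpace ι) = conjTransposeMul ι y y - (matrixEquiv ι).symm 1 := by
    refine Submodule.starProjection_eq_self_iff.2 ?_
    rw [mem_hermitianSpace, map_sub, matrixEquiv_conjTransposeMul,
      LinearIsometryEquiv.apply_symm_apply]
    exact (Matrix.isHermitian_conjTranspose_mul_self _).sub Matrix.isHermitian_one
  rw [coe_defect, map_sub, matrixEquiv_conjTransposeMul, LinearIsometryEquiv.apply_symm_apply]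

theorem norm_defect (y : patternSpace S) :
    ‖defect y‖ = ‖(matrixEquiv ι y)ᴴ * matrixEquiv ι y - 1‖ := by
  rw [← matrixEquiv_defect, LinearIsometryEquiv.norm_map, Submodule.coe_norm]

theorem defect_eq_zero_iff {y : patternSpace S} :
    defect y = 0 ↔ matrixEquiv ι y ∈ Matrix.unitaryGroup ι ℂ := by
  rw [Matrix.mem_unitaryGroup_iff', Matrix.star_eq_conjTranspose,
    ← sub_eq_zero (b := (1 : Matrix ι ι ℂ)), ← matrixEquiv_defect,
    LinearIsometryEquiv.map_eq_zero_iff, ZeroMemClass.coe_eq_zero]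

/-- The derivative `Y ↦ V* Y + Y* V` of `defect` at `V`, with the same projection to the subspace
of Hermitian matrices. -/
def defectDeriv (V : patternSpace S) : patternSpace S →L[ℝ] hermitianSpace ι :=
  (hermitianSpace ι).orthogonalProjectionOnto ∘L
    (conjTransposeMul ι V + (conjTransposeMul ι).flip V) ∘L (patternSpace S).subtypeL

theorem hasStrictFDerivAt_defect (V : patternSpace S) :
    HasStrictFDerivAt defect (defectDeriv V) V := by
  have inclusion := (patternSpace S).subtypeL.hasStrictFDerivAt (x := V)
  have quadratic := ((conjTransposeMul ι).isBoundedBilinearMap.hasStrictFDerivAt (V, V)).comp V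
    (inclusion.prodMk inclusion)
  refine ((hermitianSpace ι).orthogonalProjectionOnto.hasStrictFDerivAt.comp V
    (quadratic.sub_const ((matrixEquiv ι).symm 1))).congr_fderiv ?_
  ext y
  rfl

theorem continuous_defect : Continuous (defect (S := S)) :=
  continuous_iff_continuousAt.2 fun V => (hasStrictFDerivAt_defect V).continuousAt

theorem isCompact_preimage_defect (r : ℝ) :
    IsCompact (defect (S := S) ⁻¹' Metric.closedBall 0 r) := by
  refine Metric.isCompact_of_isClosed_isBounded
    (Metric.isClosed_closedBall.preimage continuous_defect) ?_
  -- `‖Y‖² = re tr (Y* Y - 1) + card ι`, and the trace is the inner product with the identity.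
  refine isBounded_iff_forall_norm_le.2
    ⟨‖(matrixEquiv ι).symm 1‖ * r + Fintype.card ι + 1, fun y hy => ?_⟩
  have norm_sq : ‖y‖ ^ 2 =
      inner ℝ ((matrixEquiv ι).symm 1) (defect y : MatSpace ι) + Fintype.card ι := by
    rw [Submodule.coe_norm, ← real_inner_self_eq_norm_sq, inner_eq_re_trace, inner_eq_re_trace,
      matrixEquiv_defect, LinearIsometryEquiv.apply_symm_apply, Matrix.conjTranspose_one,
      Matrix.one_mul, Matrix.trace_sub, Matrix.trace_one]
    simp
  have cauchy_schwarz := real_inner_le_norm ((matrixEquiv ι).symm 1) (defect y : MatSpace ι)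
  have norm_defect_le : ‖(matrixEquiv ι).symm 1‖ * ‖(defect y : MatSpace ι)‖ ≤
      ‖(matrixEquiv ι).symm 1‖ * r := by
    gcongr
    exact mem_closedBall_zero_iff.1 hy
  nlinarith [sq_nonneg (‖y‖ - 1)]

/-- Left multiplication by a unitary matrix, as an isometry of matrix space. -/
def leftMulIso (V : Matrix.unitaryGroup ι ℂ) : MatSpace ι ≃ₗᵢ[ℝ] MatSpace ι where
  toFun X := (matrixEquiv ι).symm (V * matrixEquiv ι X)
  invFun X := (matrixEquiv ι).symm (V⁻¹ * matrixEquiv ι X)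
  map_add' X Y := by rw [map_add, Matrix.mul_add, map_add]
  map_smul' c X := by rw [map_smul, Matrix.mul_smul, map_smul]; rfl
  left_inv X := by
    change (matrixEquiv ι).symm (star V.1 * (V.1 * matrixEquiv ι X)) = X
    rw [← Matrix.mul_assoc, Unitary.star_mul_self_of_mem V.2, Matrix.one_mul,
      LinearIsometryEquiv.symm_apply_apply]
  right_inv X := by
    change (matrixEquiv ι).symm (V.1 * (star V.1 * matrixEquiv ι X)) = X
    rw [← Matrix.mul_assoc, Unitary.mul_star_self_of_mem V.2, Matrix.one_mul,
      LinearIsometryEquiv.symm_apply_apply]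
  norm_map' X := by
    rw [norm_eq_sqrt_real_inner, norm_eq_sqrt_real_inner, inner_eq_re_trace, inner_eq_re_trace]
    change √(Matrix.trace ((V.1 * matrixEquiv ι X)ᴴ * (V.1 * matrixEquiv ι X))).re = _
    rw [Matrix.conjTranspose_mul, Matrix.mul_assoc, ← Matrix.mul_assoc V.1ᴴ,
      ← Matrix.star_eq_conjTranspose V.1, Unitary.star_mul_self_of_mem V.2, Matrix.one_mul]

theorem matrixEquiv_leftMulIso (V : Matrix.unitaryGroup ι ℂ) (X : MatSpace ι) :
    matrixEquiv ι (leftMulIso V X) = V * matrixEquiv ι X := rfl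

theorem matrixEquiv_leftMulIso_symm (V : Matrix.unitaryGroup ι ℂ) (X : MatSpace ι) :
    matrixEquiv ι ((leftMulIso V).symm X) = star V.1 * matrixEquiv ι X := rfl

variable {V : patternSpace S}

theorem defectDeriv_eq_compression (hV : matrixEquiv ι V ∈ Matrix.unitaryGroup ι ℂ) :
    (defectDeriv V : patternSpace S →ₗ[ℝ] hermitianSpace ι) =
      (2 : ℝ) • compression (patternSpace S) (hermitianSpace ι) (leftMulIso ⟨_, hV⟩).symm := by
  ext1 y
  apply Subtype.ext
  apply (matrixEquiv ι).injective
  change matrixEquiv ι ((hermitianSpace ι).starProjection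
      (conjTransposeMul ι V y + conjTransposeMul ι y V)) =
    matrixEquiv ι ((2 : ℝ) • (hermitianSpace ι).starProjection ((leftMulIso ⟨_, hV⟩).symm y))
  rw [map_smul, matrixEquiv_starProjection_hermitianSpace,
    matrixEquiv_starProjection_hermitianSpace, map_add, matrixEquiv_conjTransposeMul,
    matrixEquiv_conjTransposeMul, matrixEquiv_leftMulIso_symm, Matrix.star_eq_conjTranspose,
    Matrix.conjTranspose_add, Matrix.conjTranspose_mul, Matrix.conjTranspose_mul,
    Matrix.conjTranspose_conjTranspose, Matrix.conjTranspose_conjTranspose]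
  module

theorem compression_comp_compression_orthogonal (hS : IsFerrers S)
    (hV : matrixEquiv ι V ∈ Matrix.unitaryGroup ι ℂ) :
    compression (hermitianSpace ι) (patternSpace S)ᗮ (leftMulIso ⟨_, hV⟩) ∘ₗ
      compression (patternSpace S)ᗮ (hermitianSpace ι) (leftMulIso ⟨_, hV⟩).symm =
        (1 / 2 : ℝ) • 1 := by
  ext1 B
  apply Subtype.ext
  have half_add : leftMulIso ⟨_, hV⟩ ((hermitianSpace ι).starProjection
      ((leftMulIso ⟨_, hV⟩).symm B)) = (1 / 2 : ℝ) • (B : MatSpace ι) + (1 / 2 : ℝ) •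
        (matrixEquiv ι).symm (matrixEquiv ι V * (matrixEquiv ι B)ᴴ * matrixEquiv ι V) := by
    apply (matrixEquiv ι).injective
    rw [matrixEquiv_leftMulIso, matrixEquiv_starProjection_hermitianSpace,
      matrixEquiv_leftMulIso_symm, map_add, map_smul, map_smul,
      LinearIsometryEquiv.apply_symm_apply, Matrix.mul_smul, Matrix.mul_add, ← Matrix.mul_assoc,
      Unitary.mul_star_self_of_mem hV, Matrix.one_mul, Matrix.conjTranspose_mul,
      Matrix.star_eq_conjTranspose, Matrix.conjTranspose_conjTranspose, smul_add, Matrix.mul_assoc]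
  rw [LinearMap.comp_apply, coe_compression_apply, coe_compression_apply, half_add,
    map_add, map_smul, map_smul, Submodule.starProjection_eq_self_iff.2 B.2,
    Submodule.starProjection_orthogonal_apply_eq_zero
      (mul_conjTranspose_mul_mem_patternSpace hS V.2 B.2), smul_zero, add_zero]
  rfl

theorem det_defectDeriv_comp_adjoint (hS : IsFerrers S)
    (hV : matrixEquiv ι V ∈ Matrix.unitaryGroup ι ℂ) :
    LinearMap.det ((defectDeriv V : patternSpace S →ₗ[ℝ] hermitianSpace ι) ∘ₗ
      LinearMap.adjoint (𝕜 := ℝ) (E := patternSpace S) (F := hermitianSpace ι)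
        (defectDeriv V : patternSpace S →ₗ[ℝ] hermitianSpace ι)) =
      4 ^ finrank ℝ (hermitianSpace ι) * (1 / 2) ^ finrank ℝ (patternSpace S)ᗮ := by
  rw [defectDeriv_eq_compression hV]
  refine (det_smul_comp_adjoint_smul (𝕜 := ℝ) (E := patternSpace S) (H := hermitianSpace ι)
    _ _).trans ?_
  rw [det_compression_symm_comp_adjoint (compression_comp_compression_orthogonal hS hV)]
  norm_num

theorem surjective_defectDeriv (hS : IsFerrers S)
    (hV : matrixEquiv ι V ∈ Matrix.unitaryGroup ι ℂ) : Function.Surjective (defectDeriv V) :=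
  surjective_of_det_comp_ne_zero
    ((det_defectDeriv_comp_adjoint hS hV).trans_ne (by positivity))

theorem tubeDensity_defectDeriv (hS : IsFerrers S)
    (hV : matrixEquiv ι V ∈ Matrix.unitaryGroup ι ℂ) :
    tubeDensity (E := patternSpace S) (H := hermitianSpace ι) (defectDeriv V) =
      volume (Metric.ball (0 : hermitianSpace ι) 1) / ENNReal.ofReal
        √(4 ^ finrank ℝ (hermitianSpace ι) * (1 / 2) ^ finrank ℝ (patternSpace S)ᗮ) :=
  tubeDensity_eq_of_det_comp_adjoint_eq (E := patternSpace S) (H := hermitianSpace ι)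
    (det_defectDeriv_comp_adjoint hS hV)

end Defect

section UnitaryPatternSet

variable [DecidableEq ι] {S : Set (ι × ι)}

variable (S) in
/-- The unitary matrices vanishing on the cells of `S`. -/
def unitaryPatternSet : Set (MatSpace ι) :=
  {X | matrixEquiv ι X ∈ Matrix.unitaryGroup ι ℂ ∧ X ∈ patternSpace S}

theorem preimage_unitaryPatternSet :
    ((↑) : patternSpace S → MatSpace ι) ⁻¹' unitaryPatternSet S = defect ⁻¹' {0} :=
  Set.ext fun y => (and_iff_left y.2).trans defect_eq_zero_iff.symm

theorem natCast_finrank_patternSpace_sub (hS : IsFerrers S) (hne : (unitaryPatternSet S).Nonempty) :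
    ((finrank ℝ (patternSpace S) - finrank ℝ (hermitianSpace ι) : ℕ) : ℝ) =
      (Fintype.card ι : ℝ) ^ 2 - 2 * S.ncard := by
  obtain ⟨V, hV, hVS⟩ := hne
  have finrank_le := LinearMap.finrank_le_finrank_of_surjective
    (f := (defectDeriv ⟨V, hVS⟩ : patternSpace S →ₗ[ℝ] hermitianSpace ι))
    (surjective_defectDeriv hS hV)
  have finrank_add : (finrank ℝ (patternSpace S) : ℝ) + 2 * S.ncard = 2 * Fintype.card ι ^ 2 :=
    mod_cast finrank_patternSpace S
  rw [Nat.cast_sub finrank_le, finrank_hermitianSpace]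
  push_cast
  linarith

variable {𝕜 : Type*} [RCLike 𝕜]

theorem tendsto_setAverage_defect (hS : IsFerrers S) (hne : (unitaryPatternSet S).Nonempty)
    (μ : Measure (patternSpace S)) [μ.IsAddHaarMeasure] {f : MatSpace ι → 𝕜} (hf : Continuous f) :
    Tendsto (fun ε => ⨍ y in defect ⁻¹' Metric.ball 0 ε, f y ∂μ) (𝓝[>] 0)
      (𝓝 (⨍ X in unitaryPatternSet S, f X
        ∂μH[(Fintype.card ι : ℝ) ^ 2 - 2 * S.ncard])) := by
  rw [← natCast_finrank_patternSpace_sub hS hne, setAverage_hausdorffMeasure_eq_preimage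
    (patternSpace S).subtypeₗᵢ.isometry (Nat.cast_nonneg _)
    (fun X hX => ⟨⟨X, hX.2⟩, rfl⟩)]
  obtain ⟨V, hV⟩ := hne
  have zeroSet_nonempty : (defect (S := S) ⁻¹' {0}).Nonempty :=
    ⟨⟨V, hV.2⟩, defect_eq_zero_iff.2 hV.1⟩
  have tube_average := tendsto_setAverage_tube (E := patternSpace S) (H := hermitianSpace ι)
    continuous_defect one_pos (isCompact_preimage_defect 1) zeroSet_nonempty
    (fun V _ => hasStrictFDerivAt_defect V)
    (fun V hV => surjective_defectDeriv hS (defect_eq_zero_iff.1 hV))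
    (fun V hV => tubeDensity_defectDeriv hS (defect_eq_zero_iff.1 hV)) μ
    (hf.comp continuous_subtype_val)
  rw [← preimage_unitaryPatternSet] at tube_average
  exact tube_average

theorem volume_measure_on_truncated_unitary_manifold_as_limit_general (hS : IsFerrers S)
    [Fintype {p // p ∉ S}] (hne : (unitaryPatternSet S).Nonempty) {f : Matrix ι ι ℂ → 𝕜}
    (hf : Continuous f) :
    Tendsto (fun ε : ℝ => ⨍ x in {x : {p // p ∉ S} → ℂ |
        ‖(patternMatrix S x)ᴴ * patternMatrix S x - 1‖ < ε}, f (patternMatrix S x)) (𝓝[>] 0)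
      (𝓝 (⨍ X in unitaryPatternSet S, f (matrixEquiv ι X)
        ∂μH[(Fintype.card ι : ℝ) ^ 2 - 2 * S.ncard])) := by
  -- The coordinates carry the sup norm, so `e` is not isometric; it suffices that it transports
  -- Lebesgue measure to some Haar measure.
  let e := (patternCoord S).symm.toContinuousLinearEquiv
  have measurableEmbedding_e : MeasurableEmbedding e := e.toHomeomorph.measurableEmbedding
  have := e.isAddHaarMeasure_map volume
  refine (tendsto_setAverage_defect hS hne (volume.map e)
    (hf.comp (matrixEquiv ι).continuous)).congr fun ε => ?_
  have preimage_tube : e ⁻¹' (defect ⁻¹' Metric.ball 0 ε) =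
      {x | ‖(patternMatrix S x)ᴴ * patternMatrix S x - 1‖ < ε} := by
    ext x
    rw [Set.mem_preimage, Set.mem_preimage, mem_ball_zero_iff, norm_defect]
    rfl
  rw [← preimage_tube]
  exact setAverage_map measurableEmbedding_e (fun y : patternSpace S => f (matrixEquiv ι y)) _

theorem unitaryPatternSet_nonempty (hS : ∀ i, (i, i) ∉ S) : (unitaryPatternSet S).Nonempty := by
  refine ⟨(matrixEquiv ι).symm 1, ?_, fun p hp => ?_⟩
  · rw [LinearIsometryEquiv.apply_symm_apply]
    exact one_mem _
  · rw [← matrixEquiv_apply _ p.1 p.2, LinearIsometryEquiv.apply_symm_apply]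
    exact Matrix.one_apply_ne fun h => hS p.1 ((congrArg (Prod.mk p.1) h).symm ▸ hp)

end UnitaryPatternSet

end PatternedUnitary

section TruncatedPattern

open scoped Matrix.Norms.Frobenius

/-- The cells strictly below the diagonal in the first `m` rows, so that `patternSpace` of them is
`𝒩_{m,n}`. -/
def truncatedPattern (n m : ℕ) : Set (Fin n × Fin n) :=
  {p | (p.2 : ℕ) < (p.1 : ℕ) ∧ (p.1 : ℕ) < m}

variable {n m : ℕ}

instance : Fintype {p // p ∉ truncatedPattern n m} := inferInstanceAs (Fintype (FreeIdx n m))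

variable (n m) in
theorem isFerrers_truncatedPattern : IsFerrers (truncatedPattern n m) := by
  rintro i j k l ⟨hji, him⟩ ⟨hkl, hlm⟩
  obtain hik | hki := le_or_gt (i : ℕ) k
  · exact .inr ⟨hji.trans (hik.trans_lt hkl), hlm⟩
  · exact .inl ⟨hki, him⟩

theorem two_mul_ncard_truncatedPattern (hmn : m ≤ n) :
    2 * ((truncatedPattern n m).ncard : ℝ) = m * (m - 1) := by
  induction m with
  | zero => simp [truncatedPattern]
  | succ m ih =>
    let row : Fin n := ⟨m, hmn⟩
    have eq_union : truncatedPattern n (m + 1) = truncatedPattern n m ∪ {row} ×ˢ Set.Iio row := by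
      ext ⟨i, j⟩
      simp only [truncatedPattern, Set.mem_ofPred_eq, Set.mem_union, Set.mem_prod,
        Set.mem_singleton_iff, Set.mem_Iio, Fin.ext_iff, Fin.lt_def, row]
      omega
    have disjoint_row : Disjoint (truncatedPattern n m) ({row} ×ˢ Set.Iio row) :=
      Set.disjoint_left.2 fun p hp hrow => hp.2.ne (congrArg Fin.val hrow.1)
    have ncard_Iio : (Set.Iio row).ncard = m := by
      rw [Set.ncard_eq_toFinset_card', Set.toFinset_Iio, Fin.card_Iio]
    rw [eq_union, Set.ncard_union_eq disjoint_row, Set.ncard_prod, Set.ncard_singleton, ncard_Iio]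
    push_cast
    linarith [ih (Nat.le_of_succ_le hmn)]

theorem patternMatrix_truncatedPattern (x : {p // p ∉ truncatedPattern n m} → ℂ) :
    patternMatrix (truncatedPattern n m) x = Matrix.of fun i j => embed n m x (i, j) := by
  ext i j
  rw [Matrix.of_apply]
  unfold embed
  by_cases h : (j : ℕ) < i ∧ (i : ℕ) < m
  · rw [dif_neg (not_not.2 h)]
    exact patternMatrix_apply_of_mem (p := (i, j)) x h
  · rw [dif_pos h]
    exact patternMatrix_apply_subtype x ⟨(i, j), h⟩

theorem frobNorm_eq_norm (M : Matrix (Fin n) (Fin n) ℂ) : frobNorm n M = ‖M‖ := by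
  rw [frobNorm, ← (matrixEquiv (Fin n)).apply_symm_apply M, ← inner_eq_re_trace,
    LinearIsometryEquiv.norm_map, norm_eq_sqrt_real_inner]

variable (n m) in
theorem VSet_eq_unitaryPatternSet : VSet n m = unitaryPatternSet (truncatedPattern n m) :=
  Set.ext fun _ => and_congr_right fun _ =>
    ⟨fun h p hp => h p.1 p.2 hp.1 hp.2, fun h i j hji him => h (i, j) ⟨hji, him⟩⟩

end TruncatedPattern

/-- Integrals over `𝒱_{m,n} = 𝒩_{m,n} ∩ U(n)` with respect to its normalized volume
(Hausdorff) probability measure of dimension `n² - m(m-1)` are limits, as `ε → 0⁺`, of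
normalized Lebesgue integrals over the neighbourhoods `{X ∈ 𝒩_{m,n} : ‖X*X - I‖ < ε}`. -/
theorem volume_measure_on_truncated_unitary_manifold_as_limit
    (n m : ℕ) (hm : 1 ≤ m) (hmn : m < n)
    (f : (Fin n → Fin n → ℂ) → ℂ) (hf : Continuous f) :
    Tendsto (fun ε : ℝ =>
        (∫ x in {x : FreeIdx n m → ℂ |
            frobNorm n ((Matrix.of fun i j : Fin n => embed n m x (i, j))ᴴ *
              (Matrix.of fun i j : Fin n => embed n m x (i, j)) - 1) < ε},
          f (fun i j => embed n m x (i, j))) /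
        ((volume {x : FreeIdx n m → ℂ |
            frobNorm n ((Matrix.of fun i j : Fin n => embed n m x (i, j))ᴴ *
              (Matrix.of fun i j : Fin n => embed n m x (i, j)) - 1) < ε}).toReal : ℂ))
      (nhdsWithin (0 : ℝ) (Set.Ioi 0))
      (nhds ((∫ X in VSet n m, f (fun i j => X (i, j))
            ∂(μH[((n : ℝ) ^ 2 - m * (m - 1))] :
              Measure (EuclideanSpace ℂ (Fin n × Fin n)))) /
          (((μH[((n : ℝ) ^ 2 - m * (m - 1))] :
              Measure (EuclideanSpace ℂ (Fin n × Fin n))) (VSet n m)).toReal : ℂ))) := by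
  have main := volume_measure_on_truncated_unitary_manifold_as_limit_general
    (isFerrers_truncatedPattern n m) (unitaryPatternSet_nonempty fun i hi => hi.1.false) hf
  simp_rw [patternMatrix_truncatedPattern, ← frobNorm_eq_norm, setAverage_eq_div] at main
  rw [Fintype.card_fin, two_mul_ncard_truncatedPattern hmn.le, ← VSet_eq_unitaryPatternSet] at main
  exact main

end
end

section
/- For all integers n ≥ 1 and d ≥ 0, the following two identities hold: (i) (1/n) ∫₀^∞ ∫₀^∞ e^{−(x+y)} (x − y) Σ_{a=0}^{n−1} x^a y^{a+d} / (a! (a+d)!) dx dy = −d, and (ii) (1/n) ∫₀^∞ ∫₀^∞ e^{−(x+y)} (x − y)² Σ_{a=0}^{n−1} x^a y^{a+d} / (a! (a+d)!) dx dy = d² + d + n + 1. Equivalently, if (X,Y) has joint probability density (1/n) e^{−(x+y)} Σ_{a=0}^{n−1} x^a y^{a+d}/(a!(a+d)!) on (0,∞)², then E[X − Y] = −d and E[(X − Y)²] = d² + d + n + 1. -/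
/-!
Up to normalisation, `e^{-(x+y)} x^a y^{a+d} / (a! Γ(a+d+1))` is the joint density of independent
Gamma variables `X` and `Y` of shapes `a + 1` and `a + d + 1` and rate `1`, so the density in
question is the mixture of these product laws over a uniform `a ∈ {0, …, n-1}`. Mean and variance
of a Gamma variable of rate `1` both equal its shape, hence `E[X - Y | a] = -d` and
`E[(X - Y)² | a] = d² + (a + 1) + (a + d + 1)`. Averaging over `a` gives the two identities.
-/

open MeasureTheory Filter

noncomputable section

section GammaMeasure

open ProbabilityTheory Real Set

variable {a r p : ℝ}

lemma gammaMeasure_eq_withDensity_restrict_Ioi (a r : ℝ) :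
    gammaMeasure a r = (volume.restrict (Ioi 0)).withDensity (gammaPDF a r) := by
  rw [gammaMeasure, ← withDensity_indicator measurableSet_Ioi]
  refine withDensity_congr_ae ?_
  filter_upwards [Measure.ae_ne volume (0 : ℝ)] with x hx
  rcases hx.lt_or_gt with hneg | hpos
  · rw [gammaPDF_of_neg hneg, indicator_of_notMem (notMem_Ioi.2 hneg.le)]
  · rw [indicator_of_mem (mem_Ioi.2 hpos)]

lemma measurable_gammaPDF (a r : ℝ) : Measurable (gammaPDF a r) :=
  (measurable_gammaPDFReal a r).ennreal_ofReal

lemma toReal_gammaPDF (ha : 0 < a) (hr : 0 < r) (x : ℝ) :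
    (gammaPDF a r x).toReal = gammaPDFReal a r x :=
  ENNReal.toReal_ofReal (gammaPDFReal_nonneg ha hr x)

lemma integral_gammaMeasure (ha : 0 < a) (hr : 0 < r) (f : ℝ → ℝ) :
    ∫ x, f x ∂gammaMeasure a r = ∫ x in Ioi 0, gammaPDFReal a r x * f x := by
  rw [gammaMeasure_eq_withDensity_restrict_Ioi, integral_withDensity_eq_integral_toReal_smul
    (measurable_gammaPDF a r) (ae_of_all _ fun _ ↦ ENNReal.ofReal_lt_top)]
  simp only [toReal_gammaPDF ha hr, smul_eq_mul]

lemma gammaPDFReal_mul_rpow (ha : 0 < a) (hr : 0 < r) (hp : 0 < a + p) {x : ℝ} (hx : 0 < x) :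
    gammaPDFReal a r x * x ^ p = Gamma (a + p) / (Gamma a * r ^ p) * gammaPDFReal (a + p) r x := by
  have hΓa : Gamma a ≠ 0 := (Gamma_pos_of_pos ha).ne'
  have hΓp : Gamma (a + p) ≠ 0 := (Gamma_pos_of_pos hp).ne'
  have hrp : r ^ p ≠ 0 := (rpow_pos_of_pos hr p).ne'
  have hxp : x ^ (a + p - 1) = x ^ (a - 1) * x ^ p := by
    rw [← rpow_add hx, add_sub_right_comm]
  rw [gammaPDFReal, gammaPDFReal, if_pos hx.le, if_pos hx.le, rpow_add hr, hxp]
  field_simp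

lemma integral_rpow_gammaMeasure (ha : 0 < a) (hr : 0 < r) (hp : 0 < a + p) :
    ∫ x, x ^ p ∂gammaMeasure a r = Gamma (a + p) / (Gamma a * r ^ p) := by
  have := isProbabilityMeasure_gammaMeasure hp hr
  have hpdf : ∫ x in Ioi 0, gammaPDFReal (a + p) r x = 1 := by
    simpa using (integral_gammaMeasure hp hr fun _ ↦ 1).symm
  rw [integral_gammaMeasure ha hr, setIntegral_congr_fun measurableSet_Ioi
    (fun x hx ↦ gammaPDFReal_mul_rpow ha hr hp hx), integral_const_mul, hpdf, mul_one]

lemma integrable_rpow_gammaMeasure (ha : 0 < a) (hr : 0 < r) (hp : 0 < a + p) :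
    Integrable (fun x ↦ x ^ p) (gammaMeasure a r) := by
  refine .of_integral_ne_zero ?_
  rw [integral_rpow_gammaMeasure ha hr hp]
  have := Gamma_pos_of_pos hp
  positivity

lemma memLp_id_two_gammaMeasure (ha : 0 < a) (hr : 0 < r) : MemLp id 2 (gammaMeasure a r) := by
  rw [memLp_two_iff_integrable_sq aestronglyMeasurable_id]
  simpa using integrable_rpow_gammaMeasure ha hr (p := 2) (by positivity)

lemma integral_id_gammaMeasure (ha : 0 < a) (hr : 0 < r) : ∫ x, x ∂gammaMeasure a r = a / r := by
  have h := integral_rpow_gammaMeasure ha hr (p := 1) (by positivity)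
  simp only [rpow_one, Gamma_add_one ha.ne'] at h
  rw [h, mul_comm a, mul_div_mul_left _ _ (Gamma_pos_of_pos ha).ne']

lemma integral_sq_gammaMeasure (ha : 0 < a) (hr : 0 < r) :
    ∫ x, x ^ 2 ∂gammaMeasure a r = a * (a + 1) / r ^ 2 := by
  have h := integral_rpow_gammaMeasure ha hr (p := 2) (by positivity)
  have hΓ : Gamma (a + 2) = Gamma a * (a * (a + 1)) := by
    rw [← one_add_one_eq_two, ← add_assoc, Gamma_add_one (by positivity), Gamma_add_one ha.ne']
    ring
  simp only [rpow_two, hΓ] at h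
  rw [h, mul_div_mul_left _ _ (Gamma_pos_of_pos ha).ne']

lemma variance_id_gammaMeasure (ha : 0 < a) (hr : 0 < r) :
    Var[id; gammaMeasure a r] = a / r ^ 2 := by
  have := isProbabilityMeasure_gammaMeasure ha hr
  rw [variance_eq_sub (memLp_id_two_gammaMeasure ha hr)]
  simp only [Pi.pow_apply, id_eq, integral_sq_gammaMeasure ha hr, integral_id_gammaMeasure ha hr]
  ring

end GammaMeasure

section Product

open ProbabilityTheory

variable {Ω Ω' : Type*} {mΩ : MeasurableSpace Ω} {mΩ' : MeasurableSpace Ω'}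
  {μ : Measure Ω} {ν : Measure Ω'}

lemma memLp_sub_prod [IsFiniteMeasure μ] [IsFiniteMeasure ν] {E : Type*} [NormedAddCommGroup E]
    {X : Ω → E} {Y : Ω' → E} {p : ENNReal} (hX : MemLp X p μ) (hY : MemLp Y p ν) :
    MemLp (fun z : Ω × Ω' ↦ X z.1 - Y z.2) p (μ.prod ν) :=
  (hX.comp_fst ν).sub (hY.comp_snd μ)

variable [IsProbabilityMeasure μ] [IsProbabilityMeasure ν] {X : Ω → ℝ} {Y : Ω' → ℝ}

lemma integral_sub_prod (hX : Integrable X μ) (hY : Integrable Y ν) :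
    ∫ z, (X z.1 - Y z.2) ∂μ.prod ν = μ[X] - ν[Y] := by
  rw [integral_sub (hX.comp_fst ν) (hY.comp_snd μ), integral_fun_fst, integral_fun_snd]
  simp

lemma integral_sub_sq_prod (hX : MemLp X 2 μ) (hY : MemLp Y 2 ν) :
    ∫ z, (X z.1 - Y z.2) ^ 2 ∂μ.prod ν = (μ[X] - ν[Y]) ^ 2 + Var[X; μ] + Var[Y; ν] := by
  have hvar : Var[fun z : Ω × Ω' ↦ X z.1 - Y z.2; μ.prod ν] = Var[X; μ] + Var[Y; ν] := by
    simpa only [Pi.neg_apply, ← sub_eq_add_neg, variance_neg] using variance_add_prod hX hY.neg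
  rw [variance_eq_sub (memLp_sub_prod hX hY), integral_sub_prod
    (hX.integrable one_le_two) (hY.integrable one_le_two)] at hvar
  simp only [Pi.pow_apply] at hvar
  linarith

end Product

section GammaProduct

open ProbabilityTheory Real Set

variable {a b r s : ℝ}

lemma gammaMeasure_prod_eq_withDensity (a r b s : ℝ) :
    (gammaMeasure a r).prod (gammaMeasure b s) =
      ((volume.restrict (Ioi 0)).prod (volume.restrict (Ioi 0))).withDensity
        (fun z ↦ gammaPDF a r z.1 * gammaPDF b s z.2) := by
  rw [gammaMeasure_eq_withDensity_restrict_Ioi, gammaMeasure_eq_withDensity_restrict_Ioi,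
    prod_withDensity (measurable_gammaPDF a r) (measurable_gammaPDF b s)]

lemma measurable_gammaPDF_mul_gammaPDF (a r b s : ℝ) :
    Measurable fun z : ℝ × ℝ ↦ gammaPDF a r z.1 * gammaPDF b s z.2 :=
  ((measurable_gammaPDF a r).comp measurable_fst).mul
    ((measurable_gammaPDF b s).comp measurable_snd)

lemma gammaPDF_mul_gammaPDF_lt_top (a r b s x y : ℝ) : gammaPDF a r x * gammaPDF b s y < ⊤ :=
  ENNReal.mul_lt_top ENNReal.ofReal_lt_top ENNReal.ofReal_lt_top

lemma integrable_gammaMeasure_prod_iff (ha : 0 < a) (hr : 0 < r) (hb : 0 < b) (hs : 0 < s)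
    {f : ℝ × ℝ → ℝ} :
    Integrable f ((gammaMeasure a r).prod (gammaMeasure b s)) ↔
      Integrable (fun z ↦ gammaPDFReal a r z.1 * gammaPDFReal b s z.2 * f z)
        ((volume.restrict (Ioi 0)).prod (volume.restrict (Ioi 0))) := by
  rw [gammaMeasure_prod_eq_withDensity, integrable_withDensity_iff_integrable_smul'
    (measurable_gammaPDF_mul_gammaPDF a r b s)
    (ae_of_all _ fun _ ↦ gammaPDF_mul_gammaPDF_lt_top ..)]
  simp only [ENNReal.toReal_mul, toReal_gammaPDF ha hr, toReal_gammaPDF hb hs, smul_eq_mul]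

lemma integral_gammaMeasure_prod (ha : 0 < a) (hr : 0 < r) (hb : 0 < b) (hs : 0 < s)
    (f : ℝ × ℝ → ℝ) :
    ∫ z, f z ∂(gammaMeasure a r).prod (gammaMeasure b s) =
      ∫ z, gammaPDFReal a r z.1 * gammaPDFReal b s z.2 * f z
        ∂(volume.restrict (Ioi 0)).prod (volume.restrict (Ioi 0)) := by
  rw [gammaMeasure_prod_eq_withDensity, integral_withDensity_eq_integral_toReal_smul
    (measurable_gammaPDF_mul_gammaPDF a r b s)
    (ae_of_all _ fun _ ↦ gammaPDF_mul_gammaPDF_lt_top ..)]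
  simp only [ENNReal.toReal_mul, toReal_gammaPDF ha hr, toReal_gammaPDF hb hs, smul_eq_mul]

lemma integral_Ioi_integral_Ioi_sum_gammaPDFReal {ι : Type*} {t : Finset ι} {a r b s : ι → ℝ}
    (ha : ∀ i ∈ t, 0 < a i) (hr : ∀ i ∈ t, 0 < r i) (hb : ∀ i ∈ t, 0 < b i)
    (hs : ∀ i ∈ t, 0 < s i) {f : ℝ × ℝ → ℝ}
    (hf : ∀ i ∈ t, Integrable f ((gammaMeasure (a i) (r i)).prod (gammaMeasure (b i) (s i)))) :
    ∫ x in Ioi 0, ∫ y in Ioi 0,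
        ∑ i ∈ t, gammaPDFReal (a i) (r i) x * gammaPDFReal (b i) (s i) y * f (x, y) =
      ∑ i ∈ t, ∫ z, f z ∂(gammaMeasure (a i) (r i)).prod (gammaMeasure (b i) (s i)) := by
  have hint : ∀ i ∈ t, Integrable
      (fun z ↦ gammaPDFReal (a i) (r i) z.1 * gammaPDFReal (b i) (s i) z.2 * f z)
      ((volume.restrict (Ioi 0)).prod (volume.restrict (Ioi 0))) := fun i hi ↦
    (integrable_gammaMeasure_prod_iff (ha i hi) (hr i hi) (hb i hi) (hs i hi)).1 (hf i hi)
  rw [← integral_prod _ (integrable_finsetSum t hint), integral_finsetSum t hint]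
  exact Finset.sum_congr rfl fun i hi ↦
    (integral_gammaMeasure_prod (ha i hi) (hr i hi) (hb i hi) (hs i hi) f).symm

lemma memLp_two_sub_gammaMeasure_prod (ha : 0 < a) (hr : 0 < r) (hb : 0 < b) (hs : 0 < s) :
    MemLp (fun z : ℝ × ℝ ↦ z.1 - z.2) 2 ((gammaMeasure a r).prod (gammaMeasure b s)) := by
  have := isProbabilityMeasure_gammaMeasure ha hr
  have := isProbabilityMeasure_gammaMeasure hb hs
  exact memLp_sub_prod (memLp_id_two_gammaMeasure ha hr) (memLp_id_two_gammaMeasure hb hs)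

lemma integral_sub_gammaMeasure_prod (ha : 0 < a) (hr : 0 < r) (hb : 0 < b) (hs : 0 < s) :
    ∫ z, (z.1 - z.2) ∂(gammaMeasure a r).prod (gammaMeasure b s) = a / r - b / s := by
  have := isProbabilityMeasure_gammaMeasure ha hr
  have := isProbabilityMeasure_gammaMeasure hb hs
  rw [← integral_id_gammaMeasure ha hr, ← integral_id_gammaMeasure hb hs]
  exact integral_sub_prod ((memLp_id_two_gammaMeasure ha hr).integrable one_le_two)
    ((memLp_id_two_gammaMeasure hb hs).integrable one_le_two)

lemma integral_sub_sq_gammaMeasure_prod (ha : 0 < a) (hr : 0 < r) (hb : 0 < b) (hs : 0 < s) :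
    ∫ z, (z.1 - z.2) ^ 2 ∂(gammaMeasure a r).prod (gammaMeasure b s) =
      (a / r - b / s) ^ 2 + a / r ^ 2 + b / s ^ 2 := by
  have := isProbabilityMeasure_gammaMeasure ha hr
  have := isProbabilityMeasure_gammaMeasure hb hs
  rw [← variance_id_gammaMeasure ha hr, ← variance_id_gammaMeasure hb hs,
    ← integral_id_gammaMeasure ha hr, ← integral_id_gammaMeasure hb hs]
  exact integral_sub_sq_prod (memLp_id_two_gammaMeasure ha hr) (memLp_id_two_gammaMeasure hb hs)

end GammaProduct

section RadialMoments

open ProbabilityTheory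

lemma gammaPDFReal_add_one_mul_gammaPDFReal_add_one (a b : ℝ) {x y : ℝ} (hx : 0 ≤ x)
    (hy : 0 ≤ y) :
    gammaPDFReal (a + 1) 1 x * gammaPDFReal (b + 1) 1 y =
      Real.exp (-(x + y)) * (x ^ a * y ^ b / (Real.Gamma (a + 1) * Real.Gamma (b + 1))) := by
  simp only [gammaPDFReal, if_pos hx, if_pos hy, Real.one_rpow, one_mul, add_sub_cancel_right,
    neg_add, Real.exp_add]
  ring

lemma integral_Ioi_integral_Ioi_exp_neg_mul_sum (n : ℕ) {d : ℝ} (hd : -1 < d) {f : ℝ × ℝ → ℝ}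
    (hf : ∀ a ∈ Finset.range n,
      Integrable f ((gammaMeasure (a + 1) 1).prod (gammaMeasure (a + d + 1) 1))) :
    ∫ x in Set.Ioi (0 : ℝ), ∫ y in Set.Ioi (0 : ℝ), Real.exp (-(x + y)) * f (x, y) *
        ∑ a ∈ Finset.range n,
          x ^ a * y ^ (a + d) / ((a.factorial : ℝ) * Real.Gamma (a + d + 1)) =
      ∑ a ∈ Finset.range n,
        ∫ z, f z ∂(gammaMeasure (a + 1) 1).prod (gammaMeasure (a + d + 1) 1) := by
  rw [← integral_Ioi_integral_Ioi_sum_gammaPDFReal (fun a _ ↦ by positivity)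
    (fun _ _ ↦ one_pos) (fun a _ ↦ by linarith [a.cast_nonneg (α := ℝ)]) (fun _ _ ↦ one_pos) hf]
  refine setIntegral_congr_fun measurableSet_Ioi fun x hx ↦
    setIntegral_congr_fun measurableSet_Ioi fun y hy ↦ ?_
  simp only [gammaPDFReal_add_one_mul_gammaPDFReal_add_one _ _ (le_of_lt hx) (le_of_lt hy),
    Real.rpow_natCast, Real.Gamma_nat_eq_factorial, Finset.mul_sum]
  exact Finset.sum_congr rfl fun a _ ↦ mul_right_comm _ _ _

lemma sum_range_sq_add_shapes (n : ℕ) (d : ℝ) :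
    ∑ a ∈ Finset.range n, (d ^ 2 + (a + 1) + (a + d + 1)) = n * (d ^ 2 + d + n + 1) := by
  induction n with
  | zero => simp
  | succ k ih =>
    rw [Finset.sum_range_succ, ih]
    push_cast
    ring

theorem rectangular_radial_moments_general (n : ℕ) (hn : 1 ≤ n) {d : ℝ} (hd : -1 < d) :
    ((n : ℝ)⁻¹ * ∫ x in Set.Ioi (0 : ℝ), ∫ y in Set.Ioi (0 : ℝ),
        Real.exp (-(x + y)) * (x - y) *
          ∑ a ∈ Finset.range n,
            x ^ a * y ^ (a + d) / ((a.factorial : ℝ) * Real.Gamma (a + d + 1))) =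
      -d ∧
    ((n : ℝ)⁻¹ * ∫ x in Set.Ioi (0 : ℝ), ∫ y in Set.Ioi (0 : ℝ),
        Real.exp (-(x + y)) * (x - y) ^ 2 *
          ∑ a ∈ Finset.range n,
            x ^ a * y ^ (a + d) / ((a.factorial : ℝ) * Real.Gamma (a + d + 1))) =
      d ^ 2 + d + n + 1 := by
  have hn0 : (n : ℝ) ≠ 0 := by positivity
  have hX (a : ℕ) : (0 : ℝ) < a + 1 := by positivity
  have hY (a : ℕ) : 0 < a + d + 1 := by linarith [a.cast_nonneg (α := ℝ)]
  have hLp (a : ℕ) := memLp_two_sub_gammaMeasure_prod (hX a) one_pos (hY a) one_pos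
  have hmean (a : ℕ) : (a + 1 : ℝ) - (a + d + 1) = -d := by ring
  constructor
  · have (a : ℕ) := isProbabilityMeasure_gammaMeasure (hX a) one_pos
    have (a : ℕ) := isProbabilityMeasure_gammaMeasure (hY a) one_pos
    rw [integral_Ioi_integral_Ioi_exp_neg_mul_sum n hd fun a _ ↦ (hLp a).integrable one_le_two]
    simp only [integral_sub_gammaMeasure_prod (hX _) one_pos (hY _) one_pos, div_one,
      hmean, Finset.sum_const, Finset.card_range, nsmul_eq_mul, inv_mul_cancel_left₀ hn0]
  · rw [integral_Ioi_integral_Ioi_exp_neg_mul_sum n hd fun a _ ↦ (hLp a).integrable_sq]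
    simp only [integral_sub_sq_gammaMeasure_prod (hX _) one_pos (hY _) one_pos, one_pow,
      div_one, hmean, neg_sq, sum_range_sq_add_shapes, inv_mul_cancel_left₀ hn0]

end RadialMoments

/-- For the joint density `(1/n) e^{-(x+y)} ∑_{a<n} x^a y^{a+d}/(a!(a+d)!)` on `(0,∞)²`
(two squared-radial variables for a product of rectangular Gaussian matrices, `d = nⱼ - n₁`):
`E[X - Y] = -d` and `E[(X-Y)²] = d² + d + n + 1`. -/
theorem rectangular_radial_moments (n : ℕ) (hn : 1 ≤ n) (d : ℕ) :
    ((n : ℝ)⁻¹ * ∫ x in Set.Ioi (0 : ℝ), ∫ y in Set.Ioi (0 : ℝ),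
        Real.exp (-(x + y)) * (x - y) *
          ∑ a ∈ Finset.range n,
            x ^ a * y ^ (a + d) / ((a.factorial : ℝ) * ((a + d).factorial : ℝ))) =
      -(d : ℝ) ∧
    ((n : ℝ)⁻¹ * ∫ x in Set.Ioi (0 : ℝ), ∫ y in Set.Ioi (0 : ℝ),
        Real.exp (-(x + y)) * (x - y) ^ 2 *
          ∑ a ∈ Finset.range n,
            x ^ a * y ^ (a + d) / ((a.factorial : ℝ) * ((a + d).factorial : ℝ))) =
      (d : ℝ) ^ 2 + d + n + 1 := by
  simpa only [← Nat.cast_add, Real.rpow_natCast, Real.Gamma_nat_eq_factorial] using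
    rectangular_radial_moments_general n hn (neg_one_lt_zero.trans_le d.cast_nonneg)

end
end
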